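/- Let Q(x₁,…,x₅) = a₁x₁² + ⋯ + a₅x₅² where each aᵢ ∈ 𝔽[t] is a squarefree nonzero polynomial, the determinant D = a₁a₂a₃a₄a₅ is cubefree, and aᵢx² + aⱼy² + a_k z² is anisotropic over 𝔽_q(t) for all 1 ≤ i < j < k ≤ 5. Then there exist a permutation σ of {1,…,5}, an ε ∈ {0,1}, and a polynomial b ∈ 𝔽[t] coprime to D, such that for every monic irreducible a ∈ 𝔽[t] with a ≡ b (mod D) and deg(a) ≡ ε (mod 2), both of the following equations have solutions over 𝔽_q(t): a_{σ(1)}x² + a_{σ(2)}y² = P·a and −a_{σ(3)}u² − a_{σ(4)}v² − a_{σ(5)}w² = P·a, where P is the monic gcd of a_{σ(1)} and a_{σ(2)}. -/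

import Mathlib

open Polynomial

/-- `g` is the monic greatest common divisor of `p` and `q`. -/
def IsMonicGcd {F : Type*} [Field F] (p q g : F[X]) : Prop :=
  g.Monic ∧ g ∣ p ∧ g ∣ q ∧ ∀ r : F[X], r ∣ p → r ∣ q → r ∣ g

/-!
Legendre's theorem for ternary forms over `𝔽[t]`: if `-bc`, `-ca`, `-ab` are squares modulo the
squarefree, pairwise coprime coefficients `a`, `b`, `c`, then choosing square roots turns
divisibility of `ax² + by² + cz²` by `abc` into `deg (abc)` linear conditions on `(x, y, z)`, and
a dimension count produces a solution so small that the form vanishes at it. By quadratic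
reciprocity the residue condition at one prime follows from the others.

A quaternary form `⟨a, b, d, e⟩` is isotropic as soon as `⟨a, b, l⟩` and `⟨d, e, -l⟩` are, for some
nonzero `l`, taken here to be a prime up to a common factor of `a` and `b`. This prime has to have
prescribed quadratic characters modulo the primes dividing `abde`; it exists by Dirichlet's
argument, in which the `L`-series are formal power series: the one of the trivial character has a
pole at `1 / q`, and the others are regular and nonzero there.

For the quinary form, a permutation arranges the parities of the degrees so that no obstruction
arises at infinity. That `P * p` be represented by the binary form and by minus the ternary one
becomes a set of residue conditions on `p` at the primes dividing the determinant. Since the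
determinant is cubefree, these conditions are compatible at each prime, so the Chinese remainder
theorem supplies `b`.
-/

section DiagonalForms

/-- The diagonal quadratic form `∑ i, a i * X i ^ 2` has a nontrivial zero. -/
def IsotropicDiag {ι R : Type*} [Fintype ι] [CommSemiring R] (a : ι → R) : Prop :=
  ∃ x : ι → R, x ≠ 0 ∧ ∑ i, a i * x i ^ 2 = 0

lemma IsotropicDiag.map {ι R S : Type*} [Fintype ι] [CommSemiring R] [CommSemiring S]
    {a : ι → R} (h : IsotropicDiag a) {φ : R →+* S} (hφ : Function.Injective φ) :
    IsotropicDiag (φ ∘ a) := by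
  obtain ⟨x, hx, hsum⟩ := h
  refine ⟨φ ∘ x, fun h0 ↦ hx (hφ.comp_left (h0.trans (by ext; simp))), ?_⟩
  simpa using congrArg φ hsum

lemma IsotropicDiag.comp_equiv {ι κ R : Type*} [Fintype ι] [Fintype κ] [CommSemiring R]
    {a : ι → R} (h : IsotropicDiag a) (e : κ ≃ ι) : IsotropicDiag (a ∘ e) := by
  obtain ⟨x, hx, hsum⟩ := h
  refine ⟨x ∘ e, fun h0 ↦ hx (e.surjective.injective_comp_right h0), ?_⟩
  simpa [e.sum_comp (fun i ↦ a i * x i ^ 2)] using hsum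

lemma IsotropicDiag.const_mul {ι R : Type*} [Fintype ι] [CommSemiring R] {a : ι → R}
    (h : IsotropicDiag a) (c : R) : IsotropicDiag fun i ↦ c * a i := by
  obtain ⟨x, hx, hsum⟩ := h
  exact ⟨x, hx, by simp_rw [mul_assoc, ← Finset.mul_sum, hsum, mul_zero]⟩

section Field

variable {K : Type*} [Field K]

-- Scaling one nonzero coordinate of an isotropic vector by `1 + s` and the others by `1 - s`
-- changes the value of the form to a nonzero multiple of `s`.
lemma IsotropicDiag.exists_sum_eq {ι : Type*} [Fintype ι] {a : ι → K} (h : IsotropicDiag a)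
    (h2 : (2 : K) ≠ 0) (ha : ∀ i, a i ≠ 0) (c : K) : ∃ x : ι → K, ∑ i, a i * x i ^ 2 = c := by
  classical
  obtain ⟨x, hx, hsum⟩ := h
  obtain ⟨j, hj⟩ := Function.ne_iff.1 hx
  set m := a j * x j ^ 2 with hm
  have hm0 : m ≠ 0 := mul_ne_zero (ha j) (pow_ne_zero 2 hj)
  set s := c / (2 ^ 2 * m) with hs
  have hrest : ∑ i ∈ Finset.univ.erase j, a i * x i ^ 2 = -m := by
    rw [← Finset.add_sum_erase _ _ (Finset.mem_univ j)] at hsum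
    exact eq_neg_of_add_eq_zero_right hsum
  refine ⟨fun i ↦ (if i = j then 1 + s else 1 - s) * x i, ?_⟩
  calc ∑ i, a i * ((if i = j then 1 + s else 1 - s) * x i) ^ 2
      = (1 + s) ^ 2 * m + (1 - s) ^ 2 * ∑ i ∈ Finset.univ.erase j, a i * x i ^ 2 := by
        rw [← Finset.add_sum_erase _ _ (Finset.mem_univ j), if_pos rfl, Finset.mul_sum]
        congr 1
        · rw [hm]; ring
        · refine Finset.sum_congr rfl fun i hi ↦ ?_
          rw [if_neg (Finset.ne_of_mem_erase hi)]; ring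
    _ = 2 ^ 2 * m * s := by rw [hrest]; ring
    _ = c := by rw [hs]; field_simp

lemma exists_sum_eq_of_isotropicDiag_cons {n : ℕ} {a : Fin n → K} {c : K} (h2 : (2 : K) ≠ 0)
    (ha : ∀ i, a i ≠ 0) (h : IsotropicDiag (Fin.cons (-c) a : Fin (n + 1) → K)) :
    ∃ x : Fin n → K, ∑ i, a i * x i ^ 2 = c := by
  obtain ⟨x, hx, hsum⟩ := h
  rw [Fin.sum_univ_succ] at hsum
  simp only [Fin.cons_zero, Fin.cons_succ] at hsum
  by_cases h0 : x 0 = 0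
  · refine IsotropicDiag.exists_sum_eq ⟨fun i ↦ x i.succ, fun htail ↦ hx ?_, ?_⟩ h2 ha c
    · ext i
      exact i.cases h0 (congrFun htail)
    · simpa [h0] using hsum
  · refine ⟨fun i ↦ x i.succ / x 0, ?_⟩
    simp_rw [div_pow, mul_div_assoc', ← Finset.sum_div]
    rw [div_eq_iff (pow_ne_zero 2 h0)]
    linear_combination hsum

end Field

lemma IsotropicDiag.glue {R : Type*} [CommRing R] [IsDomain R] {a b c d e : R} (hc : c ≠ 0)
    (h₁ : IsotropicDiag ![a, b, c]) (h₂ : IsotropicDiag ![d, e, -c]) :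
    IsotropicDiag ![a, b, d, e] := by
  obtain ⟨x, hx, hxsum⟩ := h₁
  obtain ⟨y, hy, hysum⟩ := h₂
  simp only [Fin.sum_univ_three, Matrix.cons_val] at hxsum hysum
  have of_eq {u : Fin 4 → R} (hu : u ≠ 0)
      (h : a * u 0 ^ 2 + b * u 1 ^ 2 + d * u 2 ^ 2 + e * u 3 ^ 2 = 0) :
      IsotropicDiag ![a, b, d, e] := ⟨u, hu, by simpa [Fin.sum_univ_four] using h⟩
  by_cases hx2 : x 2 = 0
  · refine of_eq (u := ![x 0, x 1, 0, 0]) (fun h ↦ hx ?_) ?_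
    · ext i; fin_cases i
      exacts [congrFun h 0, congrFun h 1, hx2]
    · simpa [hx2] using hxsum
  by_cases hy2 : y 2 = 0
  · refine of_eq (u := ![0, 0, y 0, y 1]) (fun h ↦ hy ?_) ?_
    · ext i; fin_cases i
      exacts [congrFun h 2, congrFun h 3, hy2]
    · simpa [hy2] using hysum
  refine of_eq (u := ![y 2 * x 0, y 2 * x 1, x 2 * y 0, x 2 * y 1]) (fun h ↦ ?_) ?_
  · have hx0 : x 0 = 0 := by simpa [hy2] using congrFun h 0
    have hx1 : x 1 = 0 := by simpa [hy2] using congrFun h 1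
    simp [hx0, hx1, hc, hx2] at hxsum
  · simp only [Matrix.cons_val]
    linear_combination y 2 ^ 2 * hxsum + x 2 ^ 2 * hysum

end DiagonalForms

section FiniteExtension

variable {K L : Type*} [Field K] [Fintype K] [DecidableEq K] [Field L] [Fintype L] [DecidableEq L]
  [Algebra K L]

-- Both sides are `x ^ (#L / 2)` in `L`, because the norm is `x ↦ x ^ ((#L - 1) / (#K - 1))`.
lemma quadraticChar_norm (hK : ringChar K ≠ 2) (x : L) :
    quadraticChar K (Algebra.norm K x) = quadraticChar L x := by
  have hL : ringChar L ≠ 2 := by rwa [← Algebra.ringChar_eq K L]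
  have hcard : (Fintype.card L - 1) / (Fintype.card K - 1) * (Fintype.card K / 2) =
      Fintype.card L / 2 := by
    obtain ⟨m, hm⟩ := Nat.odd_iff.2 (FiniteField.odd_card_of_char_ne_two hK)
    have hm0 : 0 < m := by have := Fintype.one_lt_card (α := K); omega
    obtain ⟨k, hk⟩ : Fintype.card K - 1 ∣ Fintype.card L - 1 := by
      rw [Module.card_eq_pow_finrank (K := K) (V := L)]
      simpa using Nat.sub_dvd_pow_sub_pow (Fintype.card K) 1 (Module.finrank K L)
    have hL2 : Fintype.card L / 2 = (Fintype.card L - 1) / 2 := by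
      have := FiniteField.odd_card_of_char_ne_two hL; omega
    rw [hL2, hk, hm, Nat.add_sub_cancel, Nat.mul_div_cancel_left _ (by omega), mul_assoc,
      Nat.mul_div_cancel_left _ two_pos, show (2 * m + 1) / 2 = m by omega, mul_comm]
  refine (quadraticChar_isQuadratic K).eq_of_eq_coe (quadraticChar_isQuadratic L) hL ?_
  rw [quadraticChar_eq_pow_of_char_ne_two' hL, ← hcard, pow_mul, ← Nat.card_eq_fintype_card,
    ← Nat.card_eq_fintype_card, ← FiniteField.algebraMap_norm_eq_pow, ← map_pow,
    Nat.card_eq_fintype_card, ← quadraticChar_eq_pow_of_char_ne_two' hK, map_intCast]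

end FiniteExtension

lemma resultant_eq_leadingCoeff_pow_mul_norm {K : Type*} [Field K] [PerfectField K] (f x : K[X])
    [Fact (Irreducible f)] :
    f.resultant x = f.leadingCoeff ^ x.natDegree * Algebra.norm K (AdjoinRoot.mk f x) := by
  classical
  have hf : Irreducible f := Fact.out
  have := (AdjoinRoot.powerBasis hf.ne_zero).finite
  let E := AlgebraicClosure K
  set e := AdjoinRoot.equiv E K f hf.ne_zero with he
  set g : E → E := fun t ↦ (x.map (algebraMap K E)).eval t with hg
  have heval (σ : AdjoinRoot f →ₐ[K] E) : σ (AdjoinRoot.mk f x) = g (e σ) := by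
    have hroot : (e σ : E) = σ (AdjoinRoot.root f) := by
      simp [he, AdjoinRoot.equiv, AdjoinRoot.powerBasis_gen]
    simp only [hroot, hg]
    rw [eval_map_algebraMap, aeval_algHom_apply, AdjoinRoot.aeval_eq]
  have hroots : Multiset.Nodup (f.aroots E) :=
    nodup_roots (PerfectField.separable_of_irreducible hf).map
  have hnorm : algebraMap K E (Algebra.norm K (AdjoinRoot.mk f x)) =
      ((f.aroots E).map g).prod := by
    simp_rw [Algebra.norm_eq_prod_embeddings K E, heval, e.prod_comp fun t ↦ g t]
    exact (Finset.prod_subtype ⟨f.aroots E, hroots⟩ (fun _ ↦ Iff.rfl) g).symm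
  apply (algebraMap K E).injective
  rw [map_mul, map_pow, hnorm, ← resultant_map_map,
    ← natDegree_map (p := f) (algebraMap K E),
    resultant_eq_prod_eval _ _ _ natDegree_map_le (IsAlgClosed.splits _), leadingCoeff_map]

lemma finite_adjoinRoot {K : Type*} [Field K] [Finite K] {f : K[X]} (hf : f ≠ 0) :
    Finite (AdjoinRoot f) := by
  have := (AdjoinRoot.powerBasis hf).finite
  exact Module.finite_of_finite K

lemma not_dvd_of_isCoprime {R : Type*} [CommSemiring R] {f x y : R} (hf : ¬IsUnit f)
    (h : IsCoprime x y) (hx : f ∣ x) : ¬f ∣ y := fun hy ↦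
  hf (h.isUnit_of_dvd' hx hy)

lemma not_dvd_of_not_pow_three_dvd {M : Type*} [CommMonoid M] {f x y z N : M} (hN : ¬f ^ 3 ∣ N)
    (h : x * y * z ∣ N) (hx : f ∣ x) (hy : f ∣ y) : ¬f ∣ z := fun hz ↦
  hN ((pow_three' f ▸ mul_dvd_mul (mul_dvd_mul hx hy) hz).trans h)

lemma exists_dvd_sub_dvd_sub {R : Type*} [CommRing R] {f g : R} (h : IsCoprime f g)
    (x y : R) : ∃ z, f ∣ z - x ∧ g ∣ z - y := by
  obtain ⟨u, v, huv⟩ := h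
  exact ⟨y * (u * f) + x * (v * g), ⟨(y - x) * u, by linear_combination x * huv⟩,
    ⟨(x - y) * v, by linear_combination y * huv⟩⟩

section JacobiSymbol

variable {F : Type*} [Field F] [Fintype F] [DecidableEq F]

/-- The Jacobi symbol `(x / f)` of polynomials over a finite field, through the resultant. The
power of the leading coefficient makes it depend only on the ideal generated by `f`. -/
noncomputable def polyJacobiSym (x f : F[X]) : ℤ :=
  quadraticChar F (f.leadingCoeff ^ x.natDegree * f.resultant x)

lemma quadraticChar_pow_mul_self {c : F} (hc : c ≠ 0) (n : ℕ) :
    quadraticChar F c ^ n * quadraticChar F c ^ n = 1 := by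
  rw [← mul_pow, ← sq, quadraticChar_sq_one hc, one_pow]

variable {f g x y : F[X]}

lemma polyJacobiSym_eq_of_natDegree_le (hf : f ≠ 0) {n : ℕ} (hn : x.natDegree ≤ n) :
    polyJacobiSym x f =
      quadraticChar F (f.leadingCoeff ^ n * f.resultant x f.natDegree n) := by
  obtain ⟨k, rfl⟩ := Nat.exists_eq_add_of_le hn
  have hk := quadraticChar_pow_mul_self (leadingCoeff_ne_zero.2 hf) k
  rw [polyJacobiSym, resultant_add_right_deg _ _ _ _ _ le_rfl, coeff_natDegree, pow_add]
  simp only [map_mul, map_pow]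
  linear_combination (-(quadraticChar F f.leadingCoeff ^ x.natDegree) *
    quadraticChar F (f.resultant x)) * hk

lemma polyJacobiSym_mul_left (hf : f ≠ 0) (x y : F[X]) :
    polyJacobiSym (x * y) f = polyJacobiSym x f * polyJacobiSym y f := by
  rw [polyJacobiSym_eq_of_natDegree_le hf natDegree_mul_le, resultant_mul_right _ _ _ _ le_rfl,
    polyJacobiSym, polyJacobiSym, ← map_mul, pow_add]
  congr 1
  ring

lemma polyJacobiSym_mul_right (hf : f ≠ 0) (hg : g ≠ 0) (x : F[X]) :
    polyJacobiSym x (f * g) = polyJacobiSym x f * polyJacobiSym x g := by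
  rw [polyJacobiSym, natDegree_mul hf hg, resultant_mul_left _ _ _ _ le_rfl, leadingCoeff_mul,
    polyJacobiSym, polyJacobiSym, ← map_mul]
  congr 1
  ring

lemma polyJacobiSym_congr (hf : f ≠ 0) (h : f ∣ x - y) : polyJacobiSym x f = polyJacobiSym y f := by
  obtain ⟨p, hp⟩ := h
  obtain rfl : x = y + f * p := by rw [← hp]; ring
  set n := max y.natDegree (f.natDegree + p.natDegree)
  have hn : (y + f * p).natDegree ≤ n :=
    (natDegree_add_le _ _).trans (max_le_max le_rfl natDegree_mul_le)
  rw [polyJacobiSym_eq_of_natDegree_le hf hn,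
    polyJacobiSym_eq_of_natDegree_le hf (le_max_left _ _ : _ ≤ n),
    resultant_add_mul_right _ _ _ _ _ (by rw [add_comm]; exact le_max_right _ _) le_rfl]

lemma polyJacobiSym_C_left (c : F) (f : F[X]) :
    polyJacobiSym (C c) f = quadraticChar F c ^ f.natDegree := by
  simp [polyJacobiSym, -quadraticChar_apply]

lemma polyJacobiSym_one_left (f : F[X]) : polyJacobiSym 1 f = 1 := by
  simpa using polyJacobiSym_C_left 1 f

lemma polyJacobiSym_of_isUnit (hf : IsUnit f) (x : F[X]) : polyJacobiSym x f = 1 := by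
  obtain ⟨c, hc, rfl⟩ := Polynomial.isUnit_iff.1 hf
  simpa [polyJacobiSym, -quadraticChar_apply] using
    quadraticChar_pow_mul_self hc.ne_zero x.natDegree

lemma polyJacobiSym_congr_right (h : Associated f g) (x : F[X]) :
    polyJacobiSym x f = polyJacobiSym x g := by
  obtain ⟨u, rfl⟩ := h
  rcases eq_or_ne f 0 with rfl | hf
  · rw [zero_mul]
  · rw [polyJacobiSym_mul_right hf u.ne_zero, polyJacobiSym_of_isUnit u.isUnit, mul_one]

lemma polyJacobiSym_eq_one_of_forall_monic
    (h : ∀ p, p.Monic → Irreducible p → p ∣ f → polyJacobiSym x p = 1) (p : F[X])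
    (hp : Irreducible p) (hpf : p ∣ f) : polyJacobiSym x p = 1 :=
  (polyJacobiSym_congr_right (associated_normalize p) x).trans <|
    h _ (monic_normalize hp.ne_zero) ((associated_normalize p).irreducible hp)
      ((associated_normalize p).symm.dvd.trans hpf)

lemma polyJacobiSym_eq_zero_iff (hf : f ≠ 0) : polyJacobiSym x f = 0 ↔ ¬IsCoprime f x := by
  simp [polyJacobiSym, -quadraticChar_apply, quadraticChar_eq_zero_iff, resultant_eq_zero_iff, hf]

lemma polyJacobiSym_eq_one_or_neg_one (hf : f ≠ 0) (h : IsCoprime f x) :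
    polyJacobiSym x f = 1 ∨ polyJacobiSym x f = -1 :=
  (quadraticChar_isQuadratic F _).resolve_left
    fun h0 ↦ (polyJacobiSym_eq_zero_iff hf).1 h0 h

lemma polyJacobiSym_reciprocity (hg : g ≠ 0) (f : F[X]) :
    polyJacobiSym g f = quadraticChar F (-1) ^ (f.natDegree * g.natDegree) *
      quadraticChar F f.leadingCoeff ^ g.natDegree * quadraticChar F g.leadingCoeff ^ f.natDegree *
      polyJacobiSym f g := by
  have hg' := quadraticChar_pow_mul_self (leadingCoeff_ne_zero.2 hg) f.natDegree
  simp only [polyJacobiSym, resultant_comm f g, map_mul, map_pow]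
  linear_combination (-(quadraticChar F (-1) ^ (f.natDegree * g.natDegree)) *
    quadraticChar F f.leadingCoeff ^ g.natDegree * quadraticChar F (g.resultant f)) * hg'

lemma polyJacobiSym_eq_one_of_forall_irreducible (hf : f ≠ 0)
    (h : ∀ p, Irreducible p → p ∣ f → polyJacobiSym x p = 1) : polyJacobiSym x f = 1 := by
  induction f using UniqueFactorizationMonoid.induction_on_prime with
  | h₁ => exact absurd rfl hf
  | h₂ u hu => exact polyJacobiSym_of_isUnit hu x
  | h₃ g p hg hp ih =>
    rw [polyJacobiSym_mul_right hp.ne_zero hg, h p hp.irreducible (dvd_mul_right p g), one_mul,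
      ih hg fun r hr hrg ↦ h r hr (hrg.mul_left p)]

variable (hF : ringChar F ≠ 2)
include hF

lemma polyJacobiSym_eq_quadraticChar_mk [Fact (Irreducible f)] [Fintype (AdjoinRoot f)]
    [DecidableEq (AdjoinRoot f)] :
    polyJacobiSym x f = quadraticChar (AdjoinRoot f) (AdjoinRoot.mk f x) := by
  have hf : f.leadingCoeff ≠ 0 := leadingCoeff_ne_zero.2 (Fact.out : Irreducible f).ne_zero
  rw [polyJacobiSym, resultant_eq_leadingCoeff_pow_mul_norm, ← mul_assoc, map_mul, map_mul,
    map_pow, quadraticChar_pow_mul_self hf, one_mul, quadraticChar_norm hF]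

lemma exists_dvd_sq_sub_of_polyJacobiSym_eq_one (hf : Irreducible f)
    (h : polyJacobiSym x f = 1) : ∃ r, f ∣ r ^ 2 - x := by
  classical
  have : Fact (Irreducible f) := ⟨hf⟩
  have := finite_adjoinRoot hf.ne_zero
  have := Fintype.ofFinite (AdjoinRoot f)
  rw [polyJacobiSym_eq_quadraticChar_mk hF] at h
  have h0 : AdjoinRoot.mk f x ≠ 0 := fun h0 ↦ by simp [h0] at h
  obtain ⟨s, hs⟩ := (quadraticChar_one_iff_isSquare h0).1 h
  obtain ⟨r, rfl⟩ := AdjoinRoot.mk_surjective s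
  exact ⟨r, AdjoinRoot.mk_eq_mk.1 (by rw [map_pow, sq, hs])⟩

lemma exists_polyJacobiSym_eq_neg_one (hf : Irreducible f) : ∃ x, polyJacobiSym x f = -1 := by
  classical
  have : Fact (Irreducible f) := ⟨hf⟩
  have := finite_adjoinRoot hf.ne_zero
  have := Fintype.ofFinite (AdjoinRoot f)
  obtain ⟨s, hs⟩ := quadraticChar_exists_neg_one (F := AdjoinRoot f)
    (by rwa [← Algebra.ringChar_eq F (AdjoinRoot f)])
  obtain ⟨x, rfl⟩ := AdjoinRoot.mk_surjective s
  exact ⟨x, (polyJacobiSym_eq_quadraticChar_mk hF).trans hs⟩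

-- By the Chinese remainder theorem the square roots modulo the prime factors can be combined.
lemma exists_dvd_sq_sub_of_squarefree (hf : Squarefree f)
    (h : ∀ p, Irreducible p → p ∣ f → polyJacobiSym x p = 1) : ∃ r, f ∣ r ^ 2 - x := by
  induction f using UniqueFactorizationMonoid.induction_on_prime with
  | h₁ => exact absurd hf not_squarefree_zero
  | h₂ u hu => exact ⟨0, hu.dvd⟩
  | h₃ g p _ hp ih =>
    obtain ⟨r₁, hr₁⟩ := exists_dvd_sq_sub_of_polyJacobiSym_eq_one hF hp.irreducible
      (h p hp.irreducible (dvd_mul_right p g))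
    obtain ⟨r₂, hr₂⟩ := ih (hf.squarefree_of_dvd (dvd_mul_left g p))
      fun r hr hrg ↦ h r hr (hrg.mul_left p)
    have hpg : IsCoprime p g := (squarefree_mul_iff.1 hf).1.isCoprime
    obtain ⟨r, hrp, hrg⟩ := exists_dvd_sub_dvd_sub hpg r₁ r₂
    refine ⟨r, hpg.mul_dvd ?_ ?_⟩
    · convert dvd_add (hrp.mul_right (r + r₁)) hr₁ using 1; ring
    · convert dvd_add (hrg.mul_right (r + r₂)) hr₂ using 1; ring

end JacobiSymbol

section Legendre

lemma finrank_degreeLT (F : Type*) [Field F] (d : ℕ) : Module.finrank F (degreeLT F d) = d := by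
  rw [(degreeLTEquiv F d).finrank_eq, Module.finrank_fin_fun]

instance finite_degreeLT (F : Type*) [Field F] (d : ℕ) : Module.Finite F (degreeLT F d) :=
  Module.Finite.equiv (degreeLTEquiv F d).symm

lemma isotropicDiag_of_finite {F : Type*} [Field F] [Finite F] {a : Fin 3 → F}
    (hF : ringChar F ≠ 2) (ha : ∀ i, a i ≠ 0) : IsotropicDiag a := by
  have := Fintype.ofFinite F
  obtain ⟨x, y, hxy⟩ := FiniteField.exists_root_sum_quadratic
    (f := C (a 0) * X ^ 2) (g := C (a 1) * X ^ 2 + C (a 2))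
    (degree_C_mul_X_pow 2 (ha 0))
    ((degree_add_C (by simp [degree_C_mul_X_pow 2 (ha 1)])).trans (degree_C_mul_X_pow 2 (ha 1)))
    (FiniteField.odd_card_of_char_ne_two hF)
  refine ⟨![x, y, 1], fun h ↦ one_ne_zero (congrFun h 2), ?_⟩
  simp only [eval_add, eval_mul, eval_pow, eval_C, eval_X] at hxy
  simp only [Fin.sum_univ_three, Matrix.cons_val]
  linear_combination hxy

lemma sum_fin_three_eq_cyclic {M : Type*} [AddCommMonoid M] (f : Fin 3 → M) (i : Fin 3) :
    ∑ j, f j = f i + f (i + 1) + f (i + 2) := by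
  rw [Fin.sum_univ_three]
  fin_cases i
  · rfl
  · exact add_rotate _ _ _
  · exact (add_rotate _ _ _).symm.trans (by simp)

lemma sum_half_of_mixed_parity {n : Fin 3 → ℕ} (h : ¬∀ i j, n i % 2 = n j % 2) :
    ∑ i, (∑ j, n j + 1 - n i) / 2 = ∑ i, n i + 1 := by
  simp only [Fin.forall_fin_succ, Fin.isValue, Fin.succ_zero_eq_one, Fin.succ_one_eq_two,
    IsEmpty.forall_iff, and_true, true_and, not_and, and_imp] at h
  simp only [Fin.sum_univ_three]
  omega

lemma sum_half_of_same_parity {n : Fin 3 → ℕ} (h : ∀ i j, n i % 2 = n j % 2) :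
    ∑ i, (∑ j, n j - n i) / 2 = ∑ i, n i := by
  have h₀ := h 0 1
  have h₁ := h 0 2
  simp only [Fin.sum_univ_three]
  omega

section DimensionCount

variable {F : Type*} [Field F]

lemma degree_mul_sq_lt {a p : F[X]} {d n : ℕ} (hp : p.degree < d)
    (h : a.natDegree + 2 * d ≤ n + 1) : (a * p ^ 2).degree < n := by
  rcases eq_or_ne p 0 with rfl | hp0
  · simp
  have hpd : p.natDegree < d := (natDegree_lt_iff_degree_lt hp0).2 hp
  refine degree_le_natDegree.trans_lt ?_
  have := natDegree_mul_le (p := a) (q := p ^ 2)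
  rw [natDegree_pow] at this
  exact_mod_cast (by omega : (a * p ^ 2).natDegree < n)

variable {a : Fin 3 → F[X]}

lemma dvd_sum_mul_sq {x r : Fin 3 → F[X]} {i : Fin 3}
    (hcop : IsCoprime (a i) (a (i + 1))) (hr : a i ∣ r i ^ 2 - -(a (i + 1) * a (i + 2)))
    (hx : a i ∣ a (i + 1) * x (i + 1) - r i * x (i + 2)) : a i ∣ ∑ j, a j * x j ^ 2 := by
  refine hcop.dvd_of_dvd_mul_left ?_
  have h := dvd_add (hx.mul_right (a (i + 1) * x (i + 1) + r i * x (i + 2)))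
    (hr.mul_right (x (i + 2) ^ 2))
  rw [sum_fin_three_eq_cyclic _ i]
  convert dvd_add (dvd_mul_right (a i) (a (i + 1) * x i ^ 2)) h using 1
  ring

-- The congruences `a (i + 1) * x (i + 1) ≡ r i * x (i + 2)` modulo `a i` are `∑ deg (a i)` linear
-- conditions on `x`, and force `∏ a i` to divide the value of the form.
lemma isotropicDiag_of_sum_natDegree_lt_finrank {r : Fin 3 → F[X]} (ha : ∀ i, a i ≠ 0)
    (hcop : Pairwise (Function.onFun IsCoprime a))
    (hr : ∀ i, a i ∣ r i ^ 2 - -(a (i + 1) * a (i + 2)))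
    {V : Type*} [AddCommGroup V] [Module F V] [Module.Finite F V] (ψ : V →ₗ[F] Fin 3 → F[X])
    (hψ : Function.Injective ψ) (hV : ∑ i, (a i).natDegree < Module.finrank F V)
    (hdeg : ∀ v, (∑ i, a i * ψ v i ^ 2).degree < (∑ i, (a i).natDegree : ℕ)) :
    IsotropicDiag a := by
  have hfin (i) : Module.Finite F (AdjoinRoot (a i)) := (AdjoinRoot.powerBasis (ha i)).finite
  let ℓ (i : Fin 3) : (Fin 3 → F[X]) →ₗ[F] F[X] :=
    LinearMap.mulLeft F (a (i + 1)) ∘ₗ LinearMap.proj (i + 1) -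
      LinearMap.mulLeft F (r i) ∘ₗ LinearMap.proj (i + 2)
  let φ : V →ₗ[F] Π i, AdjoinRoot (a i) :=
    LinearMap.pi fun i ↦ (AdjoinRoot.mkₐ (a i) : F[X] →ₐ[F] _).toLinearMap ∘ₗ ℓ i ∘ₗ ψ
  have hrank : Module.finrank F (Π i, AdjoinRoot (a i)) = ∑ i, (a i).natDegree := by
    rw [Module.finrank_pi_fintype]
    exact Finset.sum_congr rfl fun i _ ↦ by
      rw [(AdjoinRoot.powerBasis (ha i)).finrank, AdjoinRoot.powerBasis_dim]
  obtain ⟨v, hv, hv0⟩ := Submodule.exists_mem_ne_zero_of_ne_bot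
    (LinearMap.ker_ne_bot_of_finrank_lt (f := φ) (hrank ▸ hV))
  have hlin (i) : a i ∣ a (i + 1) * ψ v (i + 1) - r i * ψ v (i + 2) :=
    AdjoinRoot.mk_eq_zero.1 (congrFun hv i)
  have hdvd (i) : a i ∣ ∑ j, a j * ψ v j ^ 2 :=
    dvd_sum_mul_sq (hcop (by fin_cases i <;> decide)) (hr i) (hlin i)
  refine ⟨ψ v, (map_ne_zero_iff ψ hψ).2 hv0, ?_⟩
  refine eq_zero_of_dvd_of_degree_lt (Fintype.prod_dvd_of_coprime hcop hdvd) ?_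
  rw [degree_eq_natDegree (Finset.prod_ne_zero_iff.2 fun i _ ↦ ha i),
    natDegree_prod _ _ fun i _ ↦ ha i]
  exact hdeg v

lemma isotropicDiag_of_mixed_parity {r : Fin 3 → F[X]} (ha : ∀ i, a i ≠ 0)
    (hcop : Pairwise (Function.onFun IsCoprime a))
    (hr : ∀ i, a i ∣ r i ^ 2 - -(a (i + 1) * a (i + 2)))
    (hpar : ¬∀ i j, (a i).natDegree % 2 = (a j).natDegree % 2) : IsotropicDiag a := by
  let n := ∑ i, (a i).natDegree
  let d (i : Fin 3) := (n + 1 - (a i).natDegree) / 2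
  have hn (i) : (a i).natDegree ≤ n :=
    Finset.single_le_sum (f := fun i ↦ (a i).natDegree) (fun _ _ ↦ Nat.zero_le _)
      (Finset.mem_univ i)
  refine isotropicDiag_of_sum_natDegree_lt_finrank ha hcop hr
    (V := Π i, degreeLT F (d i)) (LinearMap.pi fun i ↦ (degreeLT F (d i)).subtype ∘ₗ .proj i)
    (fun p q h ↦ by ext1 i; exact Subtype.ext (congrFun h i)) ?_ fun p ↦ ?_
  · rw [Module.finrank_pi_fintype]
    simp only [finrank_degreeLT]
    exact (sum_half_of_mixed_parity hpar).symm ▸ Nat.lt_succ_self n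
  · refine mem_degreeLT.1 (Submodule.sum_mem _ fun i _ ↦ mem_degreeLT.2 ?_)
    exact degree_mul_sq_lt (mem_degreeLT.1 (p i).2) (by have := hn i; simp only [d]; omega)

lemma degree_sum_mul_sq_lt {x : Fin 3 → F[X]} {d : Fin 3 → ℕ} {n : ℕ}
    (hd : ∀ i, (a i).natDegree + 2 * d i = n) (hx : ∀ i, (x i).natDegree ≤ d i)
    (hlc : ∑ i, (a i).leadingCoeff * (x i).coeff (d i) ^ 2 = 0) :
    (∑ i, a i * x i ^ 2).degree < n := by
  refine (degree_lt_iff_coeff_zero _ _).2 fun m hm ↦ ?_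
  have hx2 (i) : (x i ^ 2).natDegree ≤ 2 * d i := natDegree_pow_le_of_le 2 (hx i)
  rw [finsetSum_coeff]
  rcases hm.eq_or_lt with rfl | hm
  · rw [← hlc]
    refine Finset.sum_congr rfl fun i _ ↦ ?_
    rw [← hd i, coeff_mul_add_eq_of_natDegree_le le_rfl (hx2 i), coeff_pow_of_natDegree_le (hx i),
      leadingCoeff]
  · refine Finset.sum_eq_zero fun i _ ↦ coeff_eq_zero_of_natDegree_lt ?_
    exact (natDegree_mul_le_of_le le_rfl (hx2 i)).trans_lt (hd i ▸ hm)

end DimensionCount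

-- Leading coefficients along an isotropic vector of the form of leading coefficients contribute
-- one more dimension without raising the degree of the value.
lemma isotropicDiag_of_same_parity {F : Type*} [Field F] [Finite F] (hF : ringChar F ≠ 2)
    {a r : Fin 3 → F[X]} (ha : ∀ i, a i ≠ 0) (hcop : Pairwise (Function.onFun IsCoprime a))
    (hr : ∀ i, a i ∣ r i ^ 2 - -(a (i + 1) * a (i + 2)))
    (hpar : ∀ i j, (a i).natDegree % 2 = (a j).natDegree % 2) : IsotropicDiag a := by
  let n := ∑ i, (a i).natDegree
  let d (i : Fin 3) := (n - (a i).natDegree) / 2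
  have hd (i) : (a i).natDegree + 2 * d i = n := by
    have h₁ := hpar i (i + 1)
    have h₂ := hpar i (i + 2)
    simp only [d, n, sum_fin_three_eq_cyclic _ i]
    omega
  obtain ⟨s, hs0, hs⟩ := isotropicDiag_of_finite (a := fun i ↦ (a i).leadingCoeff) hF
    fun i ↦ leadingCoeff_ne_zero.2 (ha i)
  let ψ : (Π i, degreeLT F (d i)) × F →ₗ[F] Fin 3 → F[X] := LinearMap.pi fun i ↦
    (degreeLT F (d i)).subtype ∘ₗ .proj i ∘ₗ .fst F _ _ +
      s i • monomial (d i) ∘ₗ .snd F _ _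
  have hlow (v : (Π i, degreeLT F (d i)) × F) (i) : (v.1 i : F[X]).degree < d i :=
    mem_degreeLT.1 (v.1 i).2
  have hcoeff (v i) : (ψ v i).coeff (d i) = s i * v.2 := by
    simp [ψ, coeff_eq_zero_of_degree_lt (hlow v i)]
  refine isotropicDiag_of_sum_natDegree_lt_finrank ha hcop hr ψ ?_ ?_ fun v ↦
    degree_sum_mul_sq_lt hd (fun i ↦ ?_) ?_
  · refine (injective_iff_map_eq_zero ψ).2 fun v hv ↦ ?_
    obtain ⟨j, hj⟩ := Function.ne_iff.1 hs0
    have hv2 : v.2 = 0 := by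
      simpa [hv, show s j ≠ 0 from hj, eq_comm] using hcoeff v j
    refine Prod.ext (funext fun i ↦ Subtype.ext ?_) hv2
    simpa [ψ, hv2] using congrFun hv i
  · rw [Module.finrank_prod, Module.finrank_pi_fintype, Module.finrank_self]
    simp only [finrank_degreeLT]
    exact (sum_half_of_same_parity hpar).symm ▸ Nat.lt_succ_self n
  · refine natDegree_add_le_of_degree_le (natDegree_le_of_degree_le (hlow v i).le) ?_
    exact (natDegree_smul_le _ _).trans (natDegree_monomial_le _)
  · simp_rw [hcoeff, mul_pow, ← mul_assoc, ← Finset.sum_mul, hs, zero_mul]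

section FiniteField

variable {F : Type*} [Field F] [Fintype F] [DecidableEq F]

theorem isotropicDiag_of_polyJacobiSym_eq_one (hF : ringChar F ≠ 2) {a : Fin 3 → F[X]}
    (ha : ∀ i, Squarefree (a i)) (hcop : Pairwise (Function.onFun IsCoprime a))
    (h : ∀ i p, Irreducible p → p ∣ a i → polyJacobiSym (-(a (i + 1) * a (i + 2))) p = 1) :
    IsotropicDiag a := by
  choose r hr using fun i ↦ exists_dvd_sq_sub_of_squarefree hF (ha i) (h i)
  have ha0 (i) : a i ≠ 0 := (ha i).ne_zero
  by_cases hpar : ∀ i j, (a i).natDegree % 2 = (a j).natDegree % 2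
  · exact isotropicDiag_of_same_parity hF ha0 hcop hr hpar
  · exact isotropicDiag_of_mixed_parity ha0 hcop hr hpar

/-- A sufficient condition, not symmetric in `α`, `β`, `γ`, for the form `αx² + βy² + γz²` to be
isotropic over the completion of `F(t)` at infinity. -/
def SolvableAtInfinity (α β γ : F[X]) : Prop :=
  (α.natDegree ≡ β.natDegree [MOD 2] ∧ α.natDegree ≡ γ.natDegree [MOD 2]) ∨
    (α.natDegree ≡ γ.natDegree [MOD 2] ∧
      quadraticChar F (-(α.leadingCoeff * γ.leadingCoeff)) = 1)

variable {α β γ : F[X]}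

lemma polyJacobiSym_neg_left (hα : α ≠ 0) (x : F[X]) :
    polyJacobiSym (-x) α = quadraticChar F (-1) ^ α.natDegree * polyJacobiSym x α := by
  rw [← polyJacobiSym_C_left, ← polyJacobiSym_mul_left hα, C_neg, C_1, neg_one_mul]

lemma polyJacobiSym_mul_self (hα : α ≠ 0) (h : IsCoprime α β) :
    polyJacobiSym β α * polyJacobiSym β α = 1 := by
  rcases polyJacobiSym_eq_one_or_neg_one hα h with h | h <;> simp [h]

lemma polyJacobiSym_triple_product (hα : α ≠ 0) (hβ : β ≠ 0) (hγ : γ ≠ 0)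
    (hαβ : IsCoprime α β) (hαγ : IsCoprime α γ) (hβγ : IsCoprime β γ) :
    polyJacobiSym (-(β * γ)) α * polyJacobiSym (-(α * γ)) β * polyJacobiSym (-(α * β)) γ =
      quadraticChar F (-1) ^ (α.natDegree + β.natDegree + γ.natDegree + α.natDegree * β.natDegree +
        α.natDegree * γ.natDegree + β.natDegree * γ.natDegree) *
      quadraticChar F α.leadingCoeff ^ (β.natDegree + γ.natDegree) *
      quadraticChar F β.leadingCoeff ^ (α.natDegree + γ.natDegree) *
      quadraticChar F γ.leadingCoeff ^ (α.natDegree + β.natDegree) := by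
  have h₁ := polyJacobiSym_mul_self hβ hαβ.symm
  have h₂ := polyJacobiSym_mul_self hγ hαγ.symm
  have h₃ := polyJacobiSym_mul_self hγ hβγ.symm
  simp only [polyJacobiSym_neg_left, polyJacobiSym_mul_left, hα, hβ, hγ, ne_eq, not_false_eq_true]
  rw [polyJacobiSym_reciprocity hβ α, polyJacobiSym_reciprocity hγ α,
    polyJacobiSym_reciprocity hγ β]
  generalize polyJacobiSym α β = u at *
  generalize polyJacobiSym α γ = v at *
  generalize polyJacobiSym β γ = w at *
  set R := quadraticChar F (-1) ^ (α.natDegree + β.natDegree + γ.natDegree +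
        α.natDegree * β.natDegree + α.natDegree * γ.natDegree + β.natDegree * γ.natDegree) *
      quadraticChar F α.leadingCoeff ^ (β.natDegree + γ.natDegree) *
      quadraticChar F β.leadingCoeff ^ (α.natDegree + γ.natDegree) *
      quadraticChar F γ.leadingCoeff ^ (α.natDegree + β.natDegree) with hR
  calc _ = R * (u * u) * (v * v) * (w * w) := by rw [hR]; ring
    _ = R := by rw [h₁, h₂, h₃, mul_one, mul_one, mul_one]

lemma pow_eq_pow_of_modEq_two {M : Type*} [Monoid M] {x : M} (hx : x ^ 2 = 1) {m n : ℕ}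
    (h : m ≡ n [MOD 2]) : x ^ m = x ^ n := by
  rw [pow_eq_pow_mod m hx, pow_eq_pow_mod n hx, h]

lemma exponents_modEq_two {i k : ℕ} (h : i ≡ k [MOD 2]) (j : ℕ) :
    i + j + k + i * j + i * k + j * k ≡ i + j [MOD 2] ∧ j + k ≡ i + j [MOD 2] ∧
      i + k ≡ 0 [MOD 2] := by
  simp only [← ZMod.natCast_eq_natCast_iff, Nat.cast_add, Nat.cast_mul, Nat.cast_zero] at h ⊢
  rw [h]
  generalize (k : ZMod 2) = k
  generalize (j : ZMod 2) = j
  revert j k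
  decide

lemma SolvableAtInfinity.triple_product_eq_one (h : SolvableAtInfinity α β γ) (hα : α ≠ 0)
    (hβ : β ≠ 0) (hγ : γ ≠ 0) (hαβ : IsCoprime α β) (hαγ : IsCoprime α γ)
    (hβγ : IsCoprime β γ) :
    polyJacobiSym (-(β * γ)) α * polyJacobiSym (-(α * γ)) β * polyJacobiSym (-(α * β)) γ = 1 := by
  have hsq {p : F[X]} (hp : p ≠ 0) : quadraticChar F p.leadingCoeff ^ 2 = 1 :=
    quadraticChar_sq_one (leadingCoeff_ne_zero.2 hp)
  have hsq1 : quadraticChar F (-1) ^ 2 = 1 := quadraticChar_sq_one (neg_ne_zero.2 one_ne_zero)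
  rw [polyJacobiSym_triple_product hα hβ hγ hαβ hαγ hβγ]
  simp only [SolvableAtInfinity] at h
  generalize α.natDegree = i at *
  generalize β.natDegree = j at *
  generalize γ.natDegree = k at *
  rcases h with ⟨hij, hik⟩ | ⟨hik, hχ⟩
  · obtain ⟨h₁, h₂, h₃⟩ := exponents_modEq_two hik j
    have h₄ : i + j ≡ 0 [MOD 2] := h₂.symm.trans ((hij.symm.add_right k).trans h₃)
    rw [pow_eq_pow_of_modEq_two hsq1 (h₁.trans h₄), pow_eq_pow_of_modEq_two (hsq hα) (h₂.trans h₄),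
      pow_eq_pow_of_modEq_two (hsq hβ) h₃, pow_eq_pow_of_modEq_two (hsq hγ) h₄]
    simp only [pow_zero, mul_one]
  · obtain ⟨h₁, h₂, h₃⟩ := exponents_modEq_two hik j
    rw [pow_eq_pow_of_modEq_two hsq1 h₁, pow_eq_pow_of_modEq_two (hsq hα) h₂,
      pow_eq_pow_of_modEq_two (hsq hβ) h₃, pow_zero, mul_one, ← mul_pow, ← mul_pow, ← map_mul,
      ← map_mul, neg_one_mul, neg_mul, hχ, one_pow]

-- The local condition at the remaining prime `π` holds by reciprocity.
theorem isotropicDiag_of_forall_ne {δ π : F[X]} (hF : ringChar F ≠ 2) (hπ : Irreducible π)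
    (hα : Squarefree α) (hβ : Squarefree β) (hδ : Squarefree (δ * π)) (hαβ : IsCoprime α β)
    (hαδ : IsCoprime α (δ * π)) (hβδ : IsCoprime β (δ * π))
    (hα' : ∀ p, p.Monic → Irreducible p → p ∣ α → polyJacobiSym (-(β * (δ * π))) p = 1)
    (hβ' : ∀ p, p.Monic → Irreducible p → p ∣ β → polyJacobiSym (-(α * (δ * π))) p = 1)
    (hδ' : ∀ p, p.Monic → Irreducible p → p ∣ δ → polyJacobiSym (-(α * β)) p = 1)
    (hinf : SolvableAtInfinity α β (δ * π)) : IsotropicDiag ![α, β, δ * π] := by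
  have hδ0 : δ ≠ 0 := left_ne_zero_of_mul hδ.ne_zero
  replace hα' := polyJacobiSym_eq_one_of_forall_monic hα'
  replace hβ' := polyJacobiSym_eq_one_of_forall_monic hβ'
  replace hδ' := polyJacobiSym_eq_one_of_forall_monic hδ'
  have hπ' : polyJacobiSym (-(α * β)) π = 1 := by
    simpa [polyJacobiSym_mul_right hδ0 hπ.ne_zero,
      polyJacobiSym_eq_one_of_forall_irreducible hα.ne_zero hα',
      polyJacobiSym_eq_one_of_forall_irreducible hβ.ne_zero hβ',
      polyJacobiSym_eq_one_of_forall_irreducible hδ0 hδ'] using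
      hinf.triple_product_eq_one hα.ne_zero hβ.ne_zero hδ.ne_zero hαβ hαδ hβδ
  refine isotropicDiag_of_polyJacobiSym_eq_one hF ?_ ?_ fun i p hp hpi ↦ ?_
  · intro i; fin_cases i; exacts [hα, hβ, hδ]
  · intro i j hij
    fin_cases i <;> fin_cases j <;> first | exact absurd rfl hij | skip
    exacts [hαβ, hαδ, hαβ.symm, hβδ, hαδ.symm, hβδ.symm]
  · fin_cases i
    · exact hα' p hp hpi
    · exact (mul_comm α (δ * π)) ▸ hβ' p hp hpi
    · rcases hp.prime.dvd_or_dvd hpi with h | h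
      · exact hδ' p hp h
      · exact (polyJacobiSym_congr_right (hp.associated_of_dvd hπ h) _).trans hπ'

theorem isotropicDiag_of_irreducible (hF : ringChar F ≠ 2) (hα : Squarefree α) (hβ : Squarefree β)
    (hγ : Irreducible γ) (hαβ : IsCoprime α β) (hαγ : IsCoprime α γ) (hβγ : IsCoprime β γ)
    (hα' : ∀ p, p.Monic → Irreducible p → p ∣ α → polyJacobiSym (-(β * γ)) p = 1)
    (hβ' : ∀ p, p.Monic → Irreducible p → p ∣ β → polyJacobiSym (-(α * γ)) p = 1)
    (hinf : SolvableAtInfinity α β γ) : IsotropicDiag ![α, β, γ] := by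
  rw [← one_mul γ] at hαγ hβγ hα' hβ' hinf ⊢
  exact isotropicDiag_of_forall_ne hF hγ hα hβ ((one_mul γ).symm ▸ hγ.squarefree) hαβ hαγ hβγ
    hα' hβ'
    (fun p _ hp h1 ↦ absurd h1 hp.not_dvd_one) hinf

end FiniteField

end Legendre

section LSeries

section MonicsOfDegree

variable (F : Type*) [Field F] [Finite F]

lemma finite_monic_natDegree_eq (n : ℕ) : {f : F[X] | f.Monic ∧ f.natDegree = n}.Finite :=
  .of_equiv _ ((monicEquivDegreeLT n).trans (degreeLTEquiv F n).toEquiv).symm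

/-- The finite set of monic polynomials of degree `n` over a finite field. -/
noncomputable def monicsOfDegree (n : ℕ) : Finset F[X] := (finite_monic_natDegree_eq F n).toFinset

variable {F}

@[simp]
lemma mem_monicsOfDegree {n : ℕ} {f : F[X]} :
    f ∈ monicsOfDegree F n ↔ f.Monic ∧ f.natDegree = n :=
  Set.Finite.mem_toFinset _

lemma card_monicsOfDegree (n : ℕ) : (monicsOfDegree F n).card = Nat.card F ^ n :=
  calc (monicsOfDegree F n).card = Nat.card {f : F[X] // f.Monic ∧ f.natDegree = n} :=
        (Nat.card_eq_card_finite_toFinset (finite_monic_natDegree_eq F n)).symm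
    _ = Nat.card (Fin n → F) :=
        Nat.card_congr ((monicEquivDegreeLT n).trans (degreeLTEquiv F n).toEquiv)
    _ = Nat.card F ^ n := by rw [Nat.card_fun, Nat.card_fin]

end MonicsOfDegree

variable {F : Type*} [Field F]

/-- The local factor `1 - χ(p) X ^ deg p` of an `L`-series at the prime `p`. -/
noncomputable def eulerFactor {R : Type*} [CommRing R] (χ : F[X] →* R) (p : F[X]) : R[X] :=
  1 - C (χ p) * X ^ p.natDegree

variable [Finite F]

open Classical in
/-- The `L`-series `∑ χ(f) X ^ deg f` of a completely multiplicative function `χ` as a formal power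
series, over the monic `f` that are not divisible by any element of `s`. -/
noncomputable def lSeries {R : Type*} [CommRing R] (χ : F[X] →* R) (s : Finset F[X]) :
    PowerSeries R :=
  .mk fun n ↦ ∑ f ∈ monicsOfDegree F n with ∀ p ∈ s, ¬p ∣ f, χ f

open Classical in
/-- The finite set of monic irreducible polynomials of degree less than `n`. -/
noncomputable def monicPrimesLT (F : Type*) [Field F] [Finite F] (n : ℕ) : Finset F[X] :=
  {p ∈ (Finset.range n).biUnion (monicsOfDegree F) | Irreducible p}

lemma mem_monicPrimesLT {n : ℕ} {p : F[X]} :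
    p ∈ monicPrimesLT F n ↔ (p.Monic ∧ Irreducible p) ∧ p.natDegree < n := by
  simp only [monicPrimesLT, Finset.mem_filter, Finset.mem_biUnion, Finset.mem_range,
    mem_monicsOfDegree]
  exact ⟨fun ⟨⟨_, hn, hp, hd⟩, hi⟩ ↦ ⟨⟨hp, hi⟩, hd ▸ hn⟩,
    fun ⟨⟨hp, hi⟩, hn⟩ ↦ ⟨⟨_, hn, hp, rfl⟩, hi⟩⟩

section CommRing

variable {R : Type*} [CommRing R] {χ : F[X] →* R} {s t : Finset F[X]}

open Classical in
lemma sum_dvd_eq_mul_sum {p : F[X]} (hp : p.Monic ∧ Irreducible p)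
    (hs : ∀ r ∈ s, r.Monic ∧ Irreducible r) (hps : p ∉ s) (n : ℕ) :
    (∑ f ∈ monicsOfDegree F n with (∀ r ∈ s, ¬r ∣ f) ∧ p ∣ f, χ f) =
      χ p * if p.natDegree ≤ n then (lSeries χ s).coeff (n - p.natDegree) else 0 := by
  split_ifs with hn
  · rw [lSeries, PowerSeries.coeff_mk, Finset.mul_sum]
    symm
    refine Finset.sum_bij (fun g _ ↦ p * g) (fun g hg ↦ ?_)
      (fun g _ g' _ h ↦ mul_left_cancel₀ hp.2.ne_zero h) (fun f hf ↦ ?_)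
      fun g _ ↦ (map_mul χ p g).symm
    · simp only [Finset.mem_filter, mem_monicsOfDegree] at hg ⊢
      obtain ⟨⟨hg, hgn⟩, hgs⟩ := hg
      refine ⟨⟨hp.1.mul hg, ?_⟩, fun r hr hrpg ↦ ?_, dvd_mul_right p g⟩
      · rw [hp.1.natDegree_mul hg, hgn, Nat.add_sub_cancel' hn]
      · rcases (hs r hr).2.prime.dvd_or_dvd hrpg with h | h
        · have := eq_of_monic_of_associated (hs r hr).1 hp.1 ((hs r hr).2.associated_of_dvd hp.2 h)
          exact hps (this ▸ hr)
        · exact hgs r hr h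
    · simp only [Finset.mem_filter, mem_monicsOfDegree] at hf ⊢
      obtain ⟨⟨hf, hfn⟩, hfs, g, rfl⟩ := hf
      have hg : g.Monic := hp.1.of_mul_monic_left hf
      rw [hp.1.natDegree_mul hg] at hfn
      exact ⟨g, ⟨⟨hg, by omega⟩, fun r hr hrg ↦ hfs r hr (hrg.mul_left p)⟩, rfl⟩
  · rw [mul_zero]
    refine Finset.sum_eq_zero fun f hf ↦ absurd ?_ hn
    simp only [Finset.mem_filter, mem_monicsOfDegree] at hf
    obtain ⟨⟨hf, rfl⟩, -, hpf⟩ := hf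
    exact natDegree_le_of_dvd hpf hf.ne_zero

open Classical in
lemma lSeries_insert {p : F[X]} (hp : p.Monic ∧ Irreducible p)
    (hs : ∀ r ∈ s, r.Monic ∧ Irreducible r) (hps : p ∉ s) :
    lSeries χ (insert p s) = eulerFactor χ p * lSeries χ s := by
  ext n
  have hsplit := Finset.sum_filter_add_sum_filter_not
    {f ∈ monicsOfDegree F n | ∀ r ∈ s, ¬r ∣ f} (p ∣ ·) χ
  simp only [Finset.filter_filter, sum_dvd_eq_mul_sum hp hs hps] at hsplit
  simp only [eulerFactor, coe_sub, coe_one, coe_mul, coe_C, coe_pow, coe_X, sub_mul, one_mul,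
    map_sub, mul_assoc, PowerSeries.coeff_C_mul, PowerSeries.coeff_X_pow_mul']
  rw [eq_sub_iff_add_eq']
  convert hsplit using 2
  · simp only [lSeries, PowerSeries.coeff_mk, Finset.forall_mem_insert, and_comm]
  · simp only [lSeries, PowerSeries.coeff_mk]

open Classical in
lemma lSeries_union (hs : ∀ p ∈ s, p.Monic ∧ Irreducible p)
    (ht : ∀ p ∈ t, p.Monic ∧ Irreducible p) (hst : Disjoint t s) :
    lSeries χ (t ∪ s) = (∏ p ∈ t, eulerFactor χ p : R[X]) * lSeries χ s := by
  induction t using Finset.induction_on with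
  | empty => simp
  | insert p t hpt ih =>
    rw [Finset.forall_mem_insert] at ht
    rw [Finset.disjoint_insert_left] at hst
    rw [Finset.insert_union, lSeries_insert ht.1
      (fun r hr ↦ (Finset.mem_union.1 hr).elim (ht.2 r) (hs r)) (by simp [hpt, hst.1]),
      ih ht.2 hst.2, Finset.prod_insert hpt, coe_mul, mul_assoc]

lemma X_pow_dvd_lSeries_sub_one {n : ℕ} (hs : ∀ p ∈ s, Irreducible p) (h : monicPrimesLT F n ⊆ s) :
    PowerSeries.X ^ n ∣ lSeries χ s - 1 := by
  classical
  refine PowerSeries.X_pow_dvd_iff.2 fun k hk ↦ ?_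
  rw [map_sub, sub_eq_zero, lSeries, PowerSeries.coeff_mk, PowerSeries.coeff_one]
  split_ifs with hk0
  · rw [Finset.sum_eq_single_of_mem 1 (by simpa [hk0] using fun p hp ↦ (hs p hp).not_dvd_one)
      fun f hf hf1 ↦ ?_, map_one]
    simp only [Finset.mem_filter, mem_monicsOfDegree, hk0] at hf
    exact absurd (hf.1.1.natDegree_eq_zero.1 hf.1.2) hf1
  · refine Finset.sum_eq_zero fun f hf ↦ ?_
    simp only [Finset.mem_filter, mem_monicsOfDegree] at hf
    obtain ⟨⟨hf, rfl⟩, hfs⟩ := hf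
    obtain ⟨p, hp, hpi, hpf⟩ :=
      exists_monic_irreducible_factor f fun hu ↦ hk0 (natDegree_eq_zero_of_isUnit hu)
    exact absurd hpf (hfs p (h (mem_monicPrimesLT.2
      ⟨⟨hp, hpi⟩, (natDegree_le_of_dvd hpf hf.ne_zero).trans_lt hk⟩)))

open Classical in
lemma X_pow_dvd_prod_eulerFactor_mul_lSeries_sub_one (χ : F[X] →* R)
    (hs : ∀ p ∈ s, p.Monic ∧ Irreducible p) (n : ℕ) :
    PowerSeries.X ^ n ∣
      ((∏ p ∈ monicPrimesLT F n \ s, eulerFactor χ p : R[X]) : PowerSeries R) *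
        lSeries χ s - 1 := by
  have ht : ∀ p ∈ monicPrimesLT F n \ s, p.Monic ∧ Irreducible p := fun p hp ↦
    (mem_monicPrimesLT.1 (Finset.mem_sdiff.1 hp).1).1
  rw [← lSeries_union hs ht Finset.sdiff_disjoint]
  refine X_pow_dvd_lSeries_sub_one (fun p hp ↦ ?_) (by simp)
  exact (Finset.mem_union.1 hp).elim (fun h ↦ (ht p h).2) fun h ↦ (hs p h).2

-- Modulo `X ^ n` each `L`-series is the inverse of a finite Euler product.
lemma prod_lSeries_eq_prod_lSeries {ι : Type*} {A B : Finset ι} {χ : ι → F[X] →* R}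
    (hs : ∀ p ∈ s, p.Monic ∧ Irreducible p)
    (h : ∀ p, p.Monic → Irreducible p → p ∉ s →
      ∏ i ∈ A, eulerFactor (χ i) p = ∏ i ∈ B, eulerFactor (χ i) p) :
    ∏ i ∈ A, lSeries (χ i) s = ∏ i ∈ B, lSeries (χ i) s := by
  classical
  ext n
  let π := Ideal.Quotient.mk (Ideal.span {(PowerSeries.X : PowerSeries R) ^ (n + 1)})
  let P := monicPrimesLT F (n + 1) \ s
  let E (i : ι) : PowerSeries R := (∏ p ∈ P, eulerFactor (χ i) p : R[X])
  have hcoe (D : Finset ι) :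
      ∏ i ∈ D, E i = (∏ p ∈ P, ∏ i ∈ D, eulerFactor (χ i) p : R[X]) := by
    rw [Finset.prod_comm]
    exact (map_prod coeToPowerSeries.ringHom _ _).symm
  have hE : ∏ i ∈ A, E i = ∏ i ∈ B, E i := by
    rw [hcoe, hcoe]
    refine congrArg _ (Finset.prod_congr rfl fun p hp ↦ ?_)
    obtain ⟨hp, hps⟩ := Finset.mem_sdiff.1 hp
    obtain ⟨⟨hpm, hpi⟩, -⟩ := mem_monicPrimesLT.1 hp
    exact h p hpm hpi hps
  have hinv (D : Finset ι) : π (∏ i ∈ D, E i) * π (∏ i ∈ D, lSeries (χ i) s) = 1 := by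
    rw [← map_mul, ← Finset.prod_mul_distrib, map_prod]
    refine Finset.prod_eq_one fun i _ ↦ ?_
    rw [← map_one π, Ideal.Quotient.eq, Ideal.mem_span_singleton]
    exact X_pow_dvd_prod_eulerFactor_mul_lSeries_sub_one (χ i) hs (n + 1)
  have hπ : π (∏ i ∈ A, lSeries (χ i) s) = π (∏ i ∈ B, lSeries (χ i) s) :=
    (IsUnit.of_mul_eq_one _ (hinv A)).mul_left_cancel ((hinv A).trans (hE ▸ (hinv B).symm))
  rw [Ideal.Quotient.eq, Ideal.mem_span_singleton, PowerSeries.X_pow_dvd_iff] at hπ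
  exact sub_eq_zero.1 ((map_sub _ _ _).symm.trans (hπ n n.lt_succ_self))

end CommRing

lemma constantCoeff_lSeries {R : Type*} [CommRing R] {χ : F[X] →* R} {s : Finset F[X]}
    (hs : ∀ p ∈ s, Irreducible p) : (lSeries χ s).constantCoeff = 1 := by
  have hempty : monicPrimesLT F 1 ⊆ s := fun p hp ↦ by
    obtain ⟨⟨-, hp⟩, h⟩ := mem_monicPrimesLT.1 hp
    exact absurd hp.natDegree_pos (by omega)
  have h := PowerSeries.X_pow_dvd_iff.1 (X_pow_dvd_lSeries_sub_one (χ := χ) hs hempty) 0 one_pos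
  rwa [PowerSeries.coeff_zero_eq_constantCoeff, map_sub, map_one, sub_eq_zero] at h

section Nonneg

variable {χ : F[X] →* ℚ} {s t : Finset F[X]}

lemma coeff_nonneg_of_one_sub_X_pow_mul {R : Type*} [Ring R] [PartialOrder R] [IsOrderedRing R]
    {g : PowerSeries R} {d n : ℕ} (hd : d ≠ 0)
    (h : ∀ k < n, 0 ≤ ((1 - PowerSeries.X ^ d) * g).coeff k) : ∀ k < n, 0 ≤ g.coeff k := by
  intro k hk
  induction k using Nat.strong_induction_on with
  | h k ih =>
    have hk' := h k hk
    rw [sub_mul, one_mul, map_sub, PowerSeries.coeff_X_pow_mul', sub_nonneg] at hk'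
    split_ifs at hk' with hdk
    · exact (ih _ (by omega) (by omega)).trans hk'
    · exact hk'

omit [Finite F] in
lemma coeff_nonneg_of_eulerFactor_mul {p : F[X]} (hp : Irreducible p)
    (hχ : χ p = 0 ∨ χ p = 1 ∨ χ p = -1) {g : PowerSeries ℚ} {n : ℕ}
    (h : ∀ k < n, 0 ≤ ((eulerFactor 1 p * eulerFactor χ p : ℚ[X]) * g).coeff k) :
    ∀ k < n, 0 ≤ g.coeff k := by
  have hd := hp.natDegree_pos.ne'
  rcases hχ with hχ | hχ | hχ
  · exact coeff_nonneg_of_one_sub_X_pow_mul hd (by simpa [eulerFactor, hχ] using h)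
  · refine coeff_nonneg_of_one_sub_X_pow_mul hd (coeff_nonneg_of_one_sub_X_pow_mul hd ?_)
    simpa [eulerFactor, hχ, mul_assoc] using h
  · refine coeff_nonneg_of_one_sub_X_pow_mul (mul_ne_zero two_ne_zero hd) ?_
    have hmul : eulerFactor 1 p * eulerFactor χ p = 1 - X ^ (2 * p.natDegree) := by
      simp only [eulerFactor, hχ, MonoidHom.one_apply, map_one, map_neg]
      ring
    simpa [hmul] using h

omit [Finite F] in
lemma coeff_nonneg_of_prod_eulerFactor_mul (ht : ∀ p ∈ t, Irreducible p)
    (hχ : ∀ p ∈ t, χ p = 0 ∨ χ p = 1 ∨ χ p = -1) {g : PowerSeries ℚ} {n : ℕ}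
    (h : ∀ k < n, 0 ≤ ((∏ p ∈ t, eulerFactor 1 p * eulerFactor χ p : ℚ[X]) * g).coeff k) :
    ∀ k < n, 0 ≤ g.coeff k := by
  classical
  induction t using Finset.induction_on with
  | empty => simpa using h
  | insert p t hpt ih =>
    rw [Finset.forall_mem_insert] at ht hχ
    rw [Finset.prod_insert hpt, coe_mul, mul_assoc] at h
    exact ih ht.2 hχ.2 (coeff_nonneg_of_eulerFactor_mul ht.1 hχ.1 h)

lemma coeff_lSeries_one_mul_lSeries_nonneg (hs : ∀ p ∈ s, p.Monic ∧ Irreducible p)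
    (hχ : ∀ p, p.Monic → Irreducible p → χ p = 0 ∨ χ p = 1 ∨ χ p = -1) (k : ℕ) :
    0 ≤ (lSeries 1 s * lSeries χ s).coeff k := by
  classical
  have hmem {p} (hp : p ∈ monicPrimesLT F (k + 1) \ s) :=
    (mem_monicPrimesLT.1 (Finset.mem_sdiff.1 hp).1).1
  refine coeff_nonneg_of_prod_eulerFactor_mul (n := k + 1) (fun p hp ↦ (hmem hp).2)
    (fun p hp ↦ hχ p (hmem hp).1 (hmem hp).2) (fun j hj ↦ ?_) k k.lt_succ_self
  have h1 := X_pow_dvd_prod_eulerFactor_mul_lSeries_sub_one (1 : F[X] →* ℚ) hs (k + 1)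
  have h2 := X_pow_dvd_prod_eulerFactor_mul_lSeries_sub_one χ hs (k + 1)
  rw [Finset.prod_mul_distrib, coe_mul, mul_mul_mul_comm]
  have hdvd := dvd_mul_sub_mul h1 h2
  rw [mul_one, PowerSeries.X_pow_dvd_iff] at hdvd
  rw [sub_eq_zero.1 ((map_sub _ _ _).symm.trans (hdvd j hj)), PowerSeries.coeff_one]
  split_ifs <;> norm_num

-- If the product were a polynomial, then after removal of the prime `X` it would be a polynomial
-- with nonnegative coefficients vanishing at `1`.
lemma lSeries_one_mul_lSeries_ne_coe
    (hχ : ∀ p, p.Monic → Irreducible p → χ p = 0 ∨ χ p = 1 ∨ χ p = -1) (A : ℚ[X]) :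
    lSeries (1 : F[X] →* ℚ) ∅ * lSeries χ ∅ ≠ A := by
  classical
  intro hA
  have hX : (X : F[X]).Monic ∧ Irreducible (X : F[X]) := ⟨monic_X, irreducible_X⟩
  have hs : ∀ p ∈ (insert X ∅ : Finset F[X]), p.Monic ∧ Irreducible p := by simpa using hX
  have hB : lSeries (1 : F[X] →* ℚ) (insert X ∅) * lSeries χ (insert X ∅) =
      (eulerFactor 1 (X : F[X]) * eulerFactor χ X * A : ℚ[X]) := by
    have hinsert (ψ : F[X] →* ℚ) : lSeries ψ (insert X ∅) = eulerFactor ψ X * lSeries ψ ∅ :=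
      lSeries_insert hX (by simp) (by simp)
    rw [hinsert, hinsert, mul_mul_mul_comm, hA, coe_mul, coe_mul]
  set B := eulerFactor 1 (X : F[X]) * eulerFactor χ X * A with hBdef
  have hnonneg (k : ℕ) : 0 ≤ B.coeff k := by
    rw [← coeff_coe, ← hB]
    exact coeff_lSeries_one_mul_lSeries_nonneg hs hχ k
  have heval : ∑ k ∈ Finset.range (B.natDegree + 1), B.coeff k = 0 := by
    have : B.eval 1 = 0 := by simp [hBdef, eulerFactor]
    simpa [eval_eq_sum_range] using this
  have hcoeff : B.coeff 0 = 1 := by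
    have hone (ψ : F[X] →* ℚ) : (lSeries ψ (insert X ∅)).constantCoeff = 1 :=
      constantCoeff_lSeries fun p hp ↦ (hs p hp).2
    rw [← coeff_coe, ← hB, PowerSeries.coeff_zero_eq_constantCoeff, map_mul, hone, hone, one_mul]
  rw [Finset.sum_eq_zero_iff_of_nonneg fun k _ ↦ hnonneg k] at heval
  exact one_ne_zero (hcoeff.symm.trans (heval 0 (by simp)))

end Nonneg

section Coeff

variable {R : Type*} [CommRing R] {χ : F[X] →* R}

lemma coeff_lSeries_empty (χ : F[X] →* R) (n : ℕ) :
    (lSeries χ ∅).coeff n = ∑ f ∈ monicsOfDegree F n, χ f := by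
  simp [lSeries]

lemma one_sub_mul_lSeries_of_forall_eq_pow {c : R}
    (hχ : ∀ f : F[X], f.Monic → χ f = c ^ f.natDegree) :
    (1 - C (c * Nat.card F) * X : R[X]) * lSeries χ ∅ = 1 := by
  have hmk : lSeries χ ∅ = PowerSeries.rescale (c * Nat.card F) (PowerSeries.mk 1) := by
    ext n
    have hsum : ∑ f ∈ monicsOfDegree F n, χ f = ∑ _f ∈ monicsOfDegree F n, c ^ n :=
      Finset.sum_congr rfl fun f hf ↦ by
        obtain ⟨hfm, rfl⟩ := mem_monicsOfDegree.1 hf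
        exact hχ f hfm
    simp [coeff_lSeries_empty, hsum, card_monicsOfDegree, mul_pow, mul_comm]
  have hpoly : ((1 - C (c * Nat.card F) * X : R[X]) : PowerSeries R) =
      PowerSeries.rescale (c * Nat.card F : R) (1 - PowerSeries.X) := by
    simp only [coe_sub, coe_one, coe_mul, coe_C, coe_X, map_sub, map_one, PowerSeries.rescale_X]
  rw [hmk, hpoly, ← map_mul, mul_comm (1 - PowerSeries.X),
    PowerSeries.mk_one_mul_one_sub_eq_one, map_one]

omit [Finite F] in
open Classical in
/-- The character `f ↦ (-1) ^ deg f`, with value `0` at `0`. -/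
noncomputable def degreeSign (F R : Type*) [Field F] [CommRing R] : F[X] →* R where
  toFun f := if f = 0 then 0 else (-1) ^ f.natDegree
  map_one' := by simp
  map_mul' f g := by
    rcases eq_or_ne f 0 with rfl | hf
    · simp
    rcases eq_or_ne g 0 with rfl | hg
    · simp
    simp [hf, hg, natDegree_mul, pow_add]

omit [Finite F] in
lemma degreeSign_apply {f : F[X]} (hf : f ≠ 0) : degreeSign F R f = (-1) ^ f.natDegree :=
  if_neg hf

lemma lSeries_degreeSign_mul (χ : F[X] →* R) :
    lSeries (degreeSign F R * χ) ∅ = PowerSeries.rescale (-1) (lSeries χ ∅) := by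
  ext n
  rw [PowerSeries.coeff_rescale, coeff_lSeries_empty, coeff_lSeries_empty, Finset.mul_sum]
  refine Finset.sum_congr rfl fun f hf ↦ ?_
  obtain ⟨hfm, rfl⟩ := mem_monicsOfDegree.1 hf
  rw [MonoidHom.mul_apply, degreeSign_apply hfm.ne_zero]

-- The map `f ↦ f + ((x - 1) * f) % m` permutes the monic polynomials of degree `n`, and it is
-- multiplication by `x` modulo `m`.
lemma coeff_lSeries_eq_zero [IsDomain R] {m x : F[X]} (hm : m ≠ 0)
    (hχ : ∀ f g, m ∣ f - g → χ f = χ g) (hx : IsCoprime m x) (hx1 : χ x ≠ 1) {n : ℕ}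
    (hn : m.natDegree ≤ n) : (lSeries χ ∅).coeff n = 0 := by
  let τ (f : F[X]) : F[X] := f + (x - 1) * f % m
  have hτ (f : F[X]) : m ∣ x * f - τ f :=
    ⟨(x - 1) * f / m, by linear_combination -EuclideanDomain.div_add_mod ((x - 1) * f) m⟩
  have hdeg (f : F[X]) (hf : f ≠ 0) (hfn : f.natDegree = n) :
      ((x - 1) * f % m).degree < f.degree := by
    refine (EuclideanDomain.mod_lt _ hm).trans_le ?_
    rw [degree_eq_natDegree hm, degree_eq_natDegree hf, hfn]
    exact_mod_cast hn
  have hmaps : ∀ f ∈ monicsOfDegree F n, τ f ∈ monicsOfDegree F n := by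
    intro f hf
    obtain ⟨hf, hfn⟩ := mem_monicsOfDegree.1 hf
    have hlt := hdeg f hf.ne_zero hfn
    exact mem_monicsOfDegree.2
      ⟨hf.add_of_left hlt, (natDegree_add_eq_left_of_degree_lt hlt).trans hfn⟩
  have hinj : Function.Injective τ := by
    intro f g hfg
    have hdvd : m ∣ f - g := hx.dvd_of_dvd_mul_left <| by
      simpa [hfg, mul_sub] using dvd_sub (hτ f) (hτ g)
    have hmod : (x - 1) * f % m = (x - 1) * g % m :=
      mod_eq_of_dvd_sub (by rw [← mul_sub]; exact hdvd.mul_left _)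
    exact add_right_cancel (hfg.trans (congrArg (g + ·) hmod.symm))
  have hsum : χ x * ∑ f ∈ monicsOfDegree F n, χ f = ∑ f ∈ monicsOfDegree F n, χ f := by
    rw [Finset.mul_sum]
    refine Finset.sum_nbij τ hmaps hinj.injOn
      (Finset.surjOn_of_injOn_of_card_le τ hmaps hinj.injOn le_rfl) fun f _ ↦ ?_
    rw [← map_mul, hχ _ _ (hτ f)]
  rw [coeff_lSeries_empty]
  exact (mul_left_eq_self₀.1 hsum).resolve_left hx1

end Coeff

section RegularNonzero

variable {K : Type*} [Field K]

/-- The power series that are quotients of polynomials not vanishing at `x`: the rational functions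
that are regular and nonzero at `x`. -/
def nonvanishingAt (x : K) : Submonoid (PowerSeries K) where
  carrier := {L | ∃ A B : K[X], A.eval x ≠ 0 ∧ B.eval x ≠ 0 ∧ B * L = A}
  one_mem' := ⟨1, 1, by simp, by simp, by simp⟩
  mul_mem' := by
    rintro L L' ⟨A, B, hA, hB, h⟩ ⟨A', B', hA', hB', h'⟩
    refine ⟨A * A', B * B', by simp [hA, hA'], by simp [hB, hB'], ?_⟩
    rw [coe_mul, coe_mul, ← h, ← h', mul_mul_mul_comm]

variable {x : K} {L M : PowerSeries K}

lemma coe_mem_nonvanishingAt {A : K[X]} :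
    (A : PowerSeries K) ∈ nonvanishingAt x ↔ A.eval x ≠ 0 := by
  refine ⟨fun ⟨A', B, hA', _, h⟩ h0 ↦ hA' ?_, fun h ↦ ⟨A, 1, h, by simp, by simp⟩⟩
  rw [← coe_mul, coe_inj] at h
  rw [← h, eval_mul, h0, mul_zero]

lemma mem_nonvanishingAt_of_mul_mem (hM : M ∈ nonvanishingAt x)
    (hLM : L * M ∈ nonvanishingAt x) : L ∈ nonvanishingAt x := by
  obtain ⟨A, B, hA, hB, hM⟩ := hM
  obtain ⟨A', B', hA', hB', hLM⟩ := hLM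
  refine ⟨B * A', A * B', by simp [hA', hB], by simp [hA, hB'], ?_⟩
  rw [coe_mul, coe_mul, ← hM, ← hLM]
  ring

end RegularNonzero

section NonvanishingAtPole

variable {χ : F[X] →* ℚ}

lemma inv_card_pow_lt_one {n : ℕ} (hn : n ≠ 0) : (Nat.card F : ℚ)⁻¹ ^ n < 1 :=
  pow_lt_one₀ (by positivity) (inv_lt_one_of_one_lt₀ (mod_cast Finite.one_lt_card)) hn

lemma eulerFactor_mem_nonvanishingAt {p : F[X]} (hp : Irreducible p)
    (hχ : χ p = 0 ∨ χ p = 1 ∨ χ p = -1) :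
    (eulerFactor χ p : PowerSeries ℚ) ∈ nonvanishingAt (Nat.card F : ℚ)⁻¹ := by
  refine coe_mem_nonvanishingAt.2 (ne_of_gt ?_)
  have hlt := inv_card_pow_lt_one (F := F) hp.natDegree_pos.ne'
  have hpos : 0 ≤ (Nat.card F : ℚ)⁻¹ ^ p.natDegree := by positivity
  rw [eulerFactor]
  rcases hχ with h | h | h <;> simp only [h, eval_sub, eval_one, eval_mul, eval_C, eval_pow, eval_X]
    <;> linarith

lemma lSeries_mem_nonvanishingAt_of_coeff_eq_zero {N : ℕ}
    (hχ : ∀ p, p.Monic → Irreducible p → χ p = 0 ∨ χ p = 1 ∨ χ p = -1)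
    (hN : ∀ n, N ≤ n → (lSeries χ ∅).coeff n = 0) :
    lSeries χ ∅ ∈ nonvanishingAt (Nat.card F : ℚ)⁻¹ := by
  set A := PowerSeries.trunc N (lSeries χ ∅)
  have hA : lSeries χ ∅ = A := by
    ext n
    rw [coeff_coe, PowerSeries.coeff_trunc]
    split_ifs with h
    exacts [rfl, hN n (not_lt.1 h)]
  rw [hA]
  refine coe_mem_nonvanishingAt.2 fun hroot ↦ ?_
  obtain ⟨B, hB⟩ := dvd_iff_isRoot.2 hroot
  have hq : (Nat.card F : ℚ) ≠ 0 := mod_cast Nat.card_pos.ne'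
  refine lSeries_one_mul_lSeries_ne_coe hχ (-C (Nat.card F : ℚ)⁻¹ * B) ?_
  have hfac : A = (1 - C (1 * Nat.card F : ℚ) * X) * (-C (Nat.card F : ℚ)⁻¹ * B) := by
    rw [hB]
    have : C (Nat.card F : ℚ) * C (Nat.card F : ℚ)⁻¹ = 1 := by rw [← C_mul, mul_inv_cancel₀ hq, C_1]
    rw [one_mul]
    linear_combination (-X * B) * this
  rw [hA, hfac, coe_mul, ← mul_assoc, mul_comm (lSeries _ _),
    one_sub_mul_lSeries_of_forall_eq_pow (by simp), one_mul]

lemma lSeries_mem_nonvanishingAt_iff {s : Finset F[X]}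
    (hs : ∀ p ∈ s, p.Monic ∧ Irreducible p) (hχ : ∀ p ∈ s, χ p = 0 ∨ χ p = 1 ∨ χ p = -1) :
    lSeries χ s ∈ nonvanishingAt (Nat.card F : ℚ)⁻¹ ↔
      lSeries χ ∅ ∈ nonvanishingAt (Nat.card F : ℚ)⁻¹ := by
  classical
  have hE : ((∏ p ∈ s, eulerFactor χ p : ℚ[X]) : PowerSeries ℚ) ∈
      nonvanishingAt (Nat.card F : ℚ)⁻¹ := by
    rw [← coeToPowerSeries.ringHom_apply, map_prod]
    exact prod_mem fun p hp ↦ eulerFactor_mem_nonvanishingAt (hs p hp).2 (hχ p hp)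
  rw [← Finset.union_empty s, lSeries_union (by simp) hs (Finset.disjoint_empty_right s)]
  exact ⟨fun h ↦ mem_nonvanishingAt_of_mul_mem hE (mul_comm (lSeries χ ∅) _ ▸ h), mul_mem hE⟩

lemma lSeries_one_notMem_nonvanishingAt {s : Finset F[X]} (hs : ∀ p ∈ s, p.Monic ∧ Irreducible p) :
    lSeries (1 : F[X] →* ℚ) s ∉ nonvanishingAt (Nat.card F : ℚ)⁻¹ := by
  rw [lSeries_mem_nonvanishingAt_iff hs (by simp)]
  intro h
  have hpole : ((1 - C (1 * Nat.card F : ℚ) * X : ℚ[X]) : PowerSeries ℚ) ∈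
      nonvanishingAt (Nat.card F : ℚ)⁻¹ :=
    mem_nonvanishingAt_of_mul_mem h <| by
      rw [one_sub_mul_lSeries_of_forall_eq_pow (by simp)]
      exact one_mem _
  exact coe_mem_nonvanishingAt.1 hpole (by simp)

end NonvanishingAtPole

section Independence

variable {ι : Type*}

lemma prod_eq_one_or_neg_one {v : ι → ℚ} {s : Finset ι} (hv : ∀ i ∈ s, v i = 1 ∨ v i = -1) :
    ∏ i ∈ s, v i = 1 ∨ ∏ i ∈ s, v i = -1 :=
  Finset.prod_induction v (fun x ↦ x = 1 ∨ x = -1)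
    (by rintro _ _ (rfl | rfl) (rfl | rfl) <;> simp) (.inl rfl) hv

-- The number of factors with `v i = 1` can be read off from the cardinality and the sum.
lemma prod_one_sub_eq_of_card_eq_of_sum_eq {A B : Finset ι} {v : ι → ℚ}
    (hv : ∀ i, v i = 1 ∨ v i = -1) (hcard : A.card = B.card)
    (hsum : ∑ i ∈ A, v i = ∑ i ∈ B, v i) (Y : ℚ[X]) :
    ∏ i ∈ A, (1 - C (v i) * Y) = ∏ i ∈ B, (1 - C (v i) * Y) := by
  have hprod (D : Finset ι) : ∏ i ∈ D, (1 - C (v i) * Y) =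
      (1 - Y) ^ (D.filter (v · = 1)).card * (1 + Y) ^ (D.filter (¬v · = 1)).card := by
    rw [← Finset.prod_filter_mul_prod_filter_not D (v · = 1)]
    congr 1 <;> refine Finset.prod_eq_pow_card fun i hi ↦ ?_
    · simp [(Finset.mem_filter.1 hi).2]
    · simp [(hv i).resolve_left (Finset.mem_filter.1 hi).2]
  have hcount (D : Finset ι) : 2 * ((D.filter (v · = 1)).card : ℚ) = D.card + ∑ i ∈ D, v i := by
    rw [Finset.card_filter, Finset.card_eq_sum_ones]
    push_cast
    rw [← Finset.sum_add_distrib, Finset.mul_sum]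
    exact Finset.sum_congr rfl fun i _ ↦ by rcases hv i with h | h <;> norm_num [h]
  have h1 : (A.filter (v · = 1)).card = (B.filter (v · = 1)).card := by
    have : 2 * ((A.filter (v · = 1)).card : ℚ) = 2 * (B.filter (v · = 1)).card := by
      rw [hcount, hcount, hcard, hsum]
    exact_mod_cast mul_left_cancel₀ two_ne_zero this
  have h2 : (A.filter (¬v · = 1)).card = (B.filter (¬v · = 1)).card := by
    have hA := A.card_filter_add_card_filter_not (v · = 1)
    have hB := B.card_filter_add_card_filter_not (v · = 1)
    omega
  rw [hprod, hprod, h1, h2]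

-- The difference of the two sides is `∏ i, (1 + η i * v i)`.
lemma sum_prod_eq_sum_prod_of_mul_eq_neg_one [Fintype ι] {η v : ι → ℚ}
    (hη : ∀ i, η i = 1 ∨ η i = -1) {j : ι} (hj : η j * v j = -1) :
    ∑ t : Finset ι with ∏ i ∈ t, η i = 1, ∏ i ∈ t, v i =
      ∑ t : Finset ι with ∏ i ∈ t, η i ≠ 1, ∏ i ∈ t, v i := by
  classical
  have hzero : ∑ t : Finset ι, (∏ i ∈ t, η i) * ∏ i ∈ t, v i = 0 := by
    simp_rw [← Finset.prod_mul_distrib]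
    rw [← Finset.powerset_univ, ← Finset.prod_one_add]
    exact Finset.prod_eq_zero (Finset.mem_univ j) (by rw [hj]; norm_num)
  rw [← Finset.sum_filter_add_sum_filter_not _ (fun t ↦ ∏ i ∈ t, η i = 1)] at hzero
  rw [← sub_eq_zero, ← hzero, sub_eq_add_neg, ← Finset.sum_neg_distrib]
  congr 1 <;> refine Finset.sum_congr rfl fun t ht ↦ ?_
  · rw [(Finset.mem_filter.1 ht).2, one_mul]
  · rw [(prod_eq_one_or_neg_one fun i _ ↦ hη i).resolve_left (Finset.mem_filter.1 ht).2,
      neg_one_mul]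

-- If no such prime exists, the Euler factors over the `t` with `η(t) = 1` and with `η(t) ≠ 1`
-- have the same product, and so have the `L`-series; but the one of the trivial character, and
-- no other, has a pole.
theorem exists_irreducible_forall_eq_of_nonvanishing [Finite ι] {T : Finset F[X]}
    (hT : ∀ p ∈ T, p.Monic ∧ Irreducible p) {χ : ι → F[X] →* ℚ}
    (hχ : ∀ p, p.Monic → Irreducible p → p ∉ T → ∀ i, χ i p = 1 ∨ χ i p = -1)
    (hL : ∀ t : Finset ι, t.Nonempty →
      lSeries (∏ i ∈ t, χ i) T ∈ nonvanishingAt (Nat.card F : ℚ)⁻¹)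
    {η : ι → ℚ} (hη : ∀ i, η i = 1 ∨ η i = -1) {j : ι} (hj : η j = -1) :
    ∃ p, p.Monic ∧ Irreducible p ∧ p ∉ T ∧ ∀ i, χ i p = η i := by
  classical
  by_contra! hnone
  have := Fintype.ofFinite ι
  let A : Finset (Finset ι) := {t | ∏ i ∈ t, η i = 1}
  let B : Finset (Finset ι) := {t | ∏ i ∈ t, η i ≠ 1}
  have hcard : A.card = B.card := by
    have := sum_prod_eq_sum_prod_of_mul_eq_neg_one (v := 1) hη (by simpa using hj)
    simpa using this
  have hfactor (p : F[X]) (hpm : p.Monic) (hp : Irreducible p) (hpT : p ∉ T) :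
      ∏ t ∈ A, eulerFactor (∏ i ∈ t, χ i) p = ∏ t ∈ B, eulerFactor (∏ i ∈ t, χ i) p := by
    obtain ⟨i, hi⟩ := hnone p hpm hp hpT
    have hprod := hχ p hpm hp hpT
    have hi' : η i * χ i p = -1 := by
      rcases hη i with h | h <;> rcases hprod i with h' | h' <;> simp_all
    refine prod_one_sub_eq_of_card_eq_of_sum_eq (fun t ↦ ?_) hcard ?_ (X ^ p.natDegree)
    · rw [MonoidHom.finsetProd_apply]
      exact prod_eq_one_or_neg_one fun i _ ↦ hprod i
    · simp_rw [MonoidHom.finsetProd_apply]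
      exact sum_prod_eq_sum_prod_of_mul_eq_neg_one hη hi'
  have hLprod := prod_lSeries_eq_prod_lSeries hT hfactor
  have hempty : ∅ ∈ A := by simp [A]
  rw [← Finset.mul_prod_erase A _ hempty, Finset.prod_empty] at hLprod
  have hA : ∏ t ∈ A.erase ∅, lSeries (∏ i ∈ t, χ i) T ∈ nonvanishingAt (Nat.card F : ℚ)⁻¹ :=
    prod_mem fun t ht ↦ hL t (Finset.nonempty_iff_ne_empty.2 (Finset.ne_of_mem_erase ht))
  have hB : ∏ t ∈ B, lSeries (∏ i ∈ t, χ i) T ∈ nonvanishingAt (Nat.card F : ℚ)⁻¹ :=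
    prod_mem fun t ht ↦ hL t <| Finset.nonempty_iff_ne_empty.2 <| by
      rintro rfl
      exact (Finset.mem_filter.1 ht).2 Finset.prod_empty
  exact lSeries_one_notMem_nonvanishingAt hT (mem_nonvanishingAt_of_mul_mem hA (hLprod ▸ hB))

end Independence

end LSeries

section Dirichlet

variable {F : Type*} [Field F] [Fintype F] [DecidableEq F]

/-- The Jacobi symbol `(· / m)` as a character. -/
noncomputable def polyJacobiSymHom {m : F[X]} (hm : m ≠ 0) : F[X] →* ℚ where
  toFun x := polyJacobiSym x m
  map_one' := by rw [polyJacobiSym_one_left, Int.cast_one]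
  map_mul' x y := by rw [polyJacobiSym_mul_left hm, Int.cast_mul]

lemma polyJacobiSymHom_apply {m : F[X]} (hm : m ≠ 0) (x : F[X]) :
    polyJacobiSymHom hm x = polyJacobiSym x m := rfl

variable {ι : Type*} {f : ι → F[X]} {s : Finset ι}

lemma exists_isCoprime_prod_polyJacobiSym_eq_neg_one (hF : ringChar F ≠ 2)
    (hf : ∀ i, Irreducible (f i)) (hcop : Pairwise (Function.onFun IsCoprime f))
    (hs : s.Nonempty) : ∃ x, IsCoprime (∏ i ∈ s, f i) x ∧ ∏ i ∈ s, polyJacobiSym x (f i) = -1 := by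
  classical
  obtain ⟨j, hj⟩ := hs
  obtain ⟨y, hy⟩ := exists_polyJacobiSym_eq_neg_one hF (hf j)
  have hjcop : IsCoprime (f j) (∏ i ∈ s.erase j, f i) :=
    .prod_right fun i hi ↦ hcop (Finset.ne_of_mem_erase hi).symm
  obtain ⟨x, hxy, hx1⟩ := exists_dvd_sub_dvd_sub hjcop y 1
  have hxj : polyJacobiSym x (f j) = -1 := (polyJacobiSym_congr (hf j).ne_zero hxy).trans hy
  have hxi (i) (hi : i ∈ s.erase j) : polyJacobiSym x (f i) = 1 :=
    (polyJacobiSym_congr (hf i).ne_zero ((Finset.dvd_prod_of_mem f hi).trans hx1)).trans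
      (polyJacobiSym_one_left _)
  refine ⟨x, .prod_left fun i hi ↦ ?_, ?_⟩
  · by_contra hnot
    rw [← polyJacobiSym_eq_zero_iff (hf i).ne_zero] at hnot
    rcases eq_or_ne i j with rfl | hij
    · omega
    · have := hxi i (Finset.mem_erase.2 ⟨hij, hi⟩); omega
  · rw [← Finset.mul_prod_erase s _ hj, hxj, Finset.prod_eq_one hxi, mul_one]

lemma exists_forall_coeff_lSeries_eq_zero (hF : ringChar F ≠ 2)
    (hf : ∀ i, Irreducible (f i)) (hcop : Pairwise (Function.onFun IsCoprime f))
    (hs : s.Nonempty) :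
    ∃ N, ∀ n, N ≤ n → (lSeries (∏ i ∈ s, polyJacobiSymHom (hf i).ne_zero) ∅).coeff n = 0 := by
  obtain ⟨x, hx, hx1⟩ := exists_isCoprime_prod_polyJacobiSym_eq_neg_one hF hf hcop hs
  refine ⟨_, fun n ↦ coeff_lSeries_eq_zero (Finset.prod_ne_zero_iff.2 fun i _ ↦ (hf i).ne_zero)
    (fun g h hgh ↦ ?_) hx ?_⟩
  · simp only [MonoidHom.finsetProd_apply, polyJacobiSymHom_apply]
    exact Finset.prod_congr rfl fun i hi ↦ congrArg _ <|
      polyJacobiSym_congr (hf i).ne_zero ((Finset.dvd_prod_of_mem f hi).trans hgh)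
  · simp only [MonoidHom.finsetProd_apply, polyJacobiSymHom_apply, ← Int.cast_prod, hx1]
    norm_num

/-- The Jacobi symbols modulo the primes `f i`, together with the sign of the degree (at `none`). -/
noncomputable def jacobiOrDegreeSign (hf : ∀ i, Irreducible (f i)) : Option ι → F[X] →* ℚ
  | none => degreeSign F ℚ
  | some i => polyJacobiSymHom (hf i).ne_zero

lemma prod_jacobiOrDegreeSign_apply (hf : ∀ i, Irreducible (f i)) (t : Finset (Option ι))
    {p : F[X]} (hp : p ≠ 0) :
    (∏ o ∈ t, jacobiOrDegreeSign hf o) p = 0 ∨ (∏ o ∈ t, jacobiOrDegreeSign hf o) p = 1 ∨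
      (∏ o ∈ t, jacobiOrDegreeSign hf o) p = -1 := by
  rw [MonoidHom.finsetProd_apply]
  refine Finset.prod_induction _ (fun y ↦ y = 0 ∨ y = 1 ∨ y = -1)
    (by rintro _ _ (rfl | rfl | rfl) (rfl | rfl | rfl) <;> simp) (by simp) fun o _ ↦ ?_
  rcases o with _ | i
  · rw [jacobiOrDegreeSign, degreeSign_apply hp]
    exact .inr (neg_one_pow_eq_or ℚ _)
  · rw [jacobiOrDegreeSign, polyJacobiSymHom_apply]
    exact_mod_cast quadraticChar_isQuadratic F _

omit [Fintype F] [DecidableEq F] in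
lemma lSeries_degreeSign_mem_nonvanishingAt [Finite F] :
    lSeries (degreeSign F ℚ) ∅ ∈ nonvanishingAt (Nat.card F : ℚ)⁻¹ := by
  have hone := one_sub_mul_lSeries_of_forall_eq_pow (χ := degreeSign F ℚ) (c := -1)
    fun f hf ↦ degreeSign_apply hf.ne_zero
  have hq : (Nat.card F : ℚ) ≠ 0 := mod_cast Nat.card_pos.ne'
  refine ⟨1, _, by simp, ?_, hone.trans coe_one.symm⟩
  norm_num [hq]

lemma lSeries_prod_jacobiOrDegreeSign_mem_nonvanishingAt (hF : ringChar F ≠ 2)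
    (hf : ∀ i, Irreducible (f i)) (hcop : Pairwise (Function.onFun IsCoprime f))
    {t : Finset (Option ι)} (ht : t.Nonempty) :
    lSeries (∏ o ∈ t, jacobiOrDegreeSign hf o) ∅ ∈ nonvanishingAt (Nat.card F : ℚ)⁻¹ := by
  classical
  have of_coeff (N : ℕ) := lSeries_mem_nonvanishingAt_of_coeff_eq_zero (N := N) fun p hp _ ↦
    prod_jacobiOrDegreeSign_apply hf t hp.ne_zero
  by_cases hnone : none ∈ t
  · have hprod : ∏ o ∈ t, jacobiOrDegreeSign hf o =
        degreeSign F ℚ * ∏ i ∈ t.eraseNone, polyJacobiSymHom (hf i).ne_zero := by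
      conv_lhs => rw [← Finset.insert_eq_of_mem hnone, ← Finset.insertNone_eraseNone,
        Finset.prod_insertNone]
      rfl
    rcases t.eraseNone.eq_empty_or_nonempty with hs | hs
    · rw [hprod, hs, Finset.prod_empty, mul_one]
      exact lSeries_degreeSign_mem_nonvanishingAt
    · obtain ⟨N, hN⟩ := exists_forall_coeff_lSeries_eq_zero hF hf hcop hs
      refine of_coeff N fun n hn ↦ ?_
      rw [hprod, lSeries_degreeSign_mul, PowerSeries.coeff_rescale, hN n hn, mul_zero]
  · have hprod : ∏ o ∈ t, jacobiOrDegreeSign hf o =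
        ∏ i ∈ t.eraseNone, polyJacobiSymHom (hf i).ne_zero := by
      conv_lhs => rw [← Finset.erase_eq_of_notMem hnone, ← Finset.map_some_eraseNone,
        Finset.prod_map]
      rfl
    have hs : t.eraseNone.Nonempty := by
      obtain ⟨o, ho⟩ := ht
      obtain ⟨i, rfl⟩ := Option.ne_none_iff_exists'.1 (ne_of_mem_of_not_mem ho hnone)
      exact ⟨i, Finset.mem_eraseNone.2 ho⟩
    obtain ⟨N, hN⟩ := exists_forall_coeff_lSeries_eq_zero hF hf hcop hs
    exact of_coeff N (hprod ▸ hN)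

omit [Fintype F] [DecidableEq F] in
lemma isCoprime_of_monic_of_irreducible {f g : F[X]} (hf : f.Monic ∧ Irreducible f)
    (hg : g.Monic ∧ Irreducible g) (h : f ≠ g) : IsCoprime f g :=
  hf.2.coprime_iff_not_dvd.2 fun hdvd ↦
    h (eq_of_monic_of_associated hf.1 hg.1 (hf.2.associated_of_dvd hg.2 hdvd))

lemma exists_irreducible_polyJacobiSym_eq_of_eq_neg_one (hF : ringChar F ≠ 2) {T : Finset F[X]}
    (hT : ∀ f ∈ T, f.Monic ∧ Irreducible f) {η : F[X] → ℤ} (hη : ∀ f ∈ T, η f = 1 ∨ η f = -1)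
    {g : F[X]} (hg : g ∈ T) (hηg : η g = -1) (ε : ℕ) :
    ∃ p, p.Monic ∧ Irreducible p ∧ p ∉ T ∧ (∀ f ∈ T, polyJacobiSym p f = η f) ∧
      p.natDegree ≡ ε [MOD 2] := by
  have hf (f : T) : Irreducible f.1 := (hT f f.2).2
  have hcop : Pairwise (Function.onFun IsCoprime ((↑) : T → F[X])) := fun p q hpq ↦
    isCoprime_of_monic_of_irreducible (hT p p.2) (hT q q.2) (Subtype.coe_ne_coe.2 hpq)
  let θ : Option T → ℚ
    | none => (-1) ^ ε
    | some f => η f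
  have hθ (o : Option T) : θ o = 1 ∨ θ o = -1 := by
    rcases o with _ | f
    · exact neg_one_pow_eq_or ℚ ε
    · rcases hη f f.2 with h | h <;> simp [θ, h]
  have hval (p : F[X]) (hpm : p.Monic) (hp : Irreducible p) (hpT : p ∉ T) (o : Option T) :
      jacobiOrDegreeSign hf o p = 1 ∨ jacobiOrDegreeSign hf o p = -1 := by
    rcases o with _ | f
    · rw [jacobiOrDegreeSign, degreeSign_apply hpm.ne_zero]
      exact neg_one_pow_eq_or ℚ _
    · rw [jacobiOrDegreeSign, polyJacobiSymHom_apply]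
      exact_mod_cast polyJacobiSym_eq_one_or_neg_one (hf f).ne_zero
        (isCoprime_of_monic_of_irreducible (hT f f.2) ⟨hpm, hp⟩ (ne_of_mem_of_not_mem f.2 hpT))
  obtain ⟨p, hpm, hp, hpT, hpθ⟩ := exists_irreducible_forall_eq_of_nonvanishing hT hval
    (fun t ht ↦ (lSeries_mem_nonvanishingAt_iff hT fun p hp ↦
      prod_jacobiOrDegreeSign_apply hf t (hT p hp).2.ne_zero).2
        (lSeries_prod_jacobiOrDegreeSign_mem_nonvanishingAt hF hf hcop ht))
    hθ (j := some ⟨g, hg⟩) (by simp [θ, hηg])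
  refine ⟨p, hpm, hp, hpT, fun f hfT ↦ ?_, ?_⟩
  · have h : (polyJacobiSym p f : ℚ) = η f := hpθ (some ⟨f, hfT⟩)
    exact_mod_cast h
  · have h : (-1 : ℚ) ^ p.natDegree = (-1) ^ ε :=
      (degreeSign_apply hpm.ne_zero).symm.trans (hpθ none)
    have heven : Even p.natDegree ↔ Even ε := by
      rw [← neg_one_pow_eq_one_iff_even (R := ℚ) (by norm_num), h,
        neg_one_pow_eq_one_iff_even (by norm_num)]
    rw [Nat.even_iff, Nat.even_iff] at heven
    rw [Nat.ModEq]
    omega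

-- A further prime makes the prescribed signs nontrivial.
theorem exists_irreducible_polyJacobiSym_eq (hF : ringChar F ≠ 2) {T : Finset F[X]}
    (hT : ∀ f ∈ T, f.Monic ∧ Irreducible f) {η : F[X] → ℤ} (hη : ∀ f ∈ T, η f = 1 ∨ η f = -1)
    (ε : ℕ) :
    ∃ p, p.Monic ∧ Irreducible p ∧ p ∉ T ∧ (∀ f ∈ T, polyJacobiSym p f = η f) ∧
      p.natDegree ≡ ε [MOD 2] := by
  have hmonic : (∏ f ∈ T, f).Monic := monic_prod_of_monic _ _ fun f hf ↦ (hT f hf).1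
  have hdeg : (X * ∏ f ∈ T, f + 1).natDegree ≠ 0 := by
    rw [← C_1, natDegree_add_C, monic_X.natDegree_mul hmonic, natDegree_X]
    omega
  obtain ⟨g, hgm, hg, hgdvd⟩ := exists_monic_irreducible_factor (X * ∏ f ∈ T, f + 1)
    (mt natDegree_eq_zero_of_isUnit hdeg)
  have hgT : g ∉ T := fun h ↦ hg.not_dvd_one <|
    (dvd_add_right ((Finset.dvd_prod_of_mem id h).mul_left X)).1 hgdvd
  obtain ⟨p, hpm, hp, hpT, hpη, hpε⟩ := exists_irreducible_polyJacobiSym_eq_of_eq_neg_one hF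
    (T := insert g T) (η := Function.update η g (-1)) (by simpa [hgm, hg] using hT)
    (fun f hf ↦ by
      rcases eq_or_ne f g with rfl | hfg
      · simp
      · simpa [hfg] using hη f (Finset.mem_of_mem_insert_of_ne hf hfg))
    (Finset.mem_insert_self g T) (by simp) ε
  rw [Finset.forall_mem_insert] at hpη
  refine ⟨p, hpm, hp, fun h ↦ hpT (Finset.mem_insert_of_mem h), fun f hf ↦ ?_, hpε⟩
  rw [hpη.2 f hf, Function.update_of_ne (ne_of_mem_of_not_mem hf hgT)]

end Dirichlet

section Prescription

variable {F : Type*} [Field F] [Fintype F] [DecidableEq F] {f : F[X]}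

lemma polyJacobiSym_eq_one_of_mul_eq_sq_mul (hf : f ≠ 0) {x y z u : F[X]} (h : x * y = u ^ 2 * z)
    (hu : IsCoprime f u) (hx : polyJacobiSym x f = 1) (hy : polyJacobiSym y f = 1) :
    polyJacobiSym z f = 1 := by
  have hmul := congrArg (polyJacobiSym · f) h
  simp only [pow_two, polyJacobiSym_mul_left hf, hx, hy] at hmul
  rcases polyJacobiSym_eq_one_or_neg_one hf hu with h | h <;> simpa [h] using hmul.symm

/-- The condition `R` follows from prescribing a nonzero quadratic character modulo `f`: it holds
at `l` as soon as `w * l` has Jacobi symbol `1`, for a suitable `w` prime to `f`. -/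
def EnforceableAt (f : F[X]) (R : F[X] → Prop) : Prop :=
  ∃ w, IsCoprime f w ∧ ∀ l, polyJacobiSym (w * l) f = 1 → R l

variable {N : F[X]} {R : F[X] → F[X] → Prop}

omit [Fintype F] in
open UniqueFactorizationMonoid in
lemma mem_toFinset_normalizedFactors (hN : N ≠ 0) :
    f ∈ (normalizedFactors N).toFinset ↔ Irreducible f ∧ f.Monic ∧ f ∣ N :=
  Multiset.mem_toFinset.trans (Polynomial.mem_normalizedFactors_iff hN)

open UniqueFactorizationMonoid in
theorem exists_irreducible_forall_of_enforceableAt (hF : ringChar F ≠ 2) (hN : N ≠ 0)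
    (hR : ∀ f, f.Monic → Irreducible f → f ∣ N → EnforceableAt f (R f)) {c : F} (hc : c ≠ 0)
    (ε : ℕ) :
    ∃ l, Irreducible l ∧ l.leadingCoeff = c ∧ l.natDegree ≡ ε [MOD 2] ∧ IsCoprime N l ∧
      ∀ f, f.Monic → Irreducible f → f ∣ N → R f l := by
  choose! w hw hwR using hR
  have hunit : IsUnit (C c) := isUnit_C.2 hc.isUnit
  have hmem {f : F[X]} := mem_toFinset_normalizedFactors (f := f) hN
  have hsign (f) (hf : Irreducible f ∧ f.Monic ∧ f ∣ N) :
      polyJacobiSym (w f * C c) f = 1 ∨ polyJacobiSym (w f * C c) f = -1 :=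
    polyJacobiSym_eq_one_or_neg_one hf.1.ne_zero <|
      (isCoprime_mul_unit_right_right hunit _ _).2 (hw f hf.2.1 hf.1 hf.2.2)
  obtain ⟨p, hpm, hp, hpT, hpη, hpε⟩ := exists_irreducible_polyJacobiSym_eq hF
    (T := (normalizedFactors N).toFinset) (η := fun f ↦ polyJacobiSym (w f * C c) f)
    (fun f hf ↦ ⟨(hmem.1 hf).2.1, (hmem.1 hf).1⟩) (fun f hf ↦ hsign f (hmem.1 hf)) ε
  have hass : Associated p (C c * p) := (associated_isUnit_mul_left_iff hunit).2 .rfl |>.symm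
  refine ⟨C c * p, hass.irreducible hp, ?_, ?_, ?_, fun f hfm hf hfN ↦ hwR f hfm hf hfN _ ?_⟩
  · rw [leadingCoeff_mul, leadingCoeff_C, hpm.leadingCoeff, mul_one]
  · rwa [natDegree_C_mul hc]
  · refine (((hass.irreducible hp).coprime_iff_not_dvd).2 fun hdvd ↦ ?_).symm
    exact hpT (hmem.2 ⟨hp, hpm, hass.dvd.trans hdvd⟩)
  · rw [← mul_assoc, polyJacobiSym_mul_left hf.ne_zero, hpη f (hmem.2 ⟨hf, hfm, hfN⟩)]
    rcases hsign f ⟨hf, hfm, hfN⟩ with h | h <;> rw [h] <;> rfl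

omit [Fintype F] [DecidableEq F] in
lemma isCoprime_of_forall_monic_irreducible {x y : F[X]} (hx : x ≠ 0)
    (h : ∀ f, f.Monic → Irreducible f → f ∣ x → ¬f ∣ y) : IsCoprime x y := by
  refine isCoprime_of_irreducible_dvd (fun h0 ↦ hx h0.1) fun g hg hgx hgy ↦ ?_
  obtain ⟨f, hfm, hf, hfg⟩ := exists_monic_irreducible_factor g hg.not_isUnit
  exact h f hfm hf (hfg.trans hgx) (hfg.trans hgy)

open UniqueFactorizationMonoid in
theorem exists_forall_dvd_sub_of_enforceableAt (hN : N ≠ 0)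
    (hR : ∀ f, f.Monic → Irreducible f → f ∣ N → EnforceableAt f (R f)) :
    ∃ b, IsCoprime b N ∧ ∀ p, N ∣ p - b → ∀ f, f.Monic → Irreducible f → f ∣ N → R f p := by
  choose! w hw hwR using hR
  have hmem {f : F[X]} := mem_toFinset_normalizedFactors (f := f) hN
  obtain ⟨b, hb⟩ := Ideal.exists_forall_sub_mem_ideal
    (I := fun f : (normalizedFactors N).toFinset ↦ Ideal.span {f.1})
    (fun f g hfg ↦ (Ideal.isCoprime_span_singleton_iff _ _).2 <|
      isCoprime_of_monic_of_irreducible ⟨(hmem.1 f.2).2.1, (hmem.1 f.2).1⟩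
        ⟨(hmem.1 g.2).2.1, (hmem.1 g.2).1⟩ (Subtype.coe_ne_coe.2 hfg)) (fun f ↦ w f.1)
  have hbw (f) (hfm : f.Monic) (hf : Irreducible f) (hfN : f ∣ N) : f ∣ b - w f :=
    Ideal.mem_span_singleton.1 (hb ⟨f, hmem.2 ⟨hf, hfm, hfN⟩⟩)
  refine ⟨b, ?_, fun p hp f hfm hf hfN ↦ hwR f hfm hf hfN _ ?_⟩
  · refine (isCoprime_of_forall_monic_irreducible hN fun f hfm hf hfN hfb ↦ ?_).symm
    exact hf.not_isUnit ((hw f hfm hf hfN).isUnit_of_dvd ((dvd_sub_right hfb).1 (hbw f hfm hf hfN)))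
  · have hpw : f ∣ p - w f := by
      simpa using dvd_add (hfN.trans hp) (hbw f hfm hf hfN)
    rw [polyJacobiSym_mul_left hf.ne_zero, polyJacobiSym_congr hf.ne_zero hpw]
    exact polyJacobiSym_mul_self hf.ne_zero (hw f hfm hf hfN)

end Prescription

section Quaternary

variable {F : Type*} [Field F] [Fintype F] [DecidableEq F] {A B D E G : F[X]}

lemma enforceableAt_quaternary {f : F[X]} (hf : Irreducible f) (hAB : IsCoprime A B)
    (hEA : IsCoprime E A) (hEB : IsCoprime E B) (hED : IsCoprime E D) (hGD : IsCoprime G D)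
    (hEG : IsCoprime E G)
    (hAD : f ∣ A → f ∣ D → polyJacobiSym (-(G * B * E)) f = 1)
    (hBD : f ∣ B → f ∣ D → polyJacobiSym (-(G * A * E)) f = 1) :
    EnforceableAt f fun l ↦ (f ∣ A → polyJacobiSym (-(B * l)) f = 1) ∧
      (f ∣ B → polyJacobiSym (-(A * l)) f = 1) ∧
      (f ∣ D → polyJacobiSym (-(E * (-G * l))) f = 1) ∧
      (f ∣ E → polyJacobiSym (-(D * (-G * l))) f = 1) := by
  have not_dvd {x y : F[X]} := not_dvd_of_isCoprime (x := x) (y := y) hf.not_isUnit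
  have cop {x y : F[X]} (h : IsCoprime x y) (hx : f ∣ x) : IsCoprime f y :=
    h.of_isCoprime_of_dvd_left hx
  by_cases hA : f ∣ A
  · refine ⟨-B, (cop hAB hA).neg_right, fun l hl ↦ ⟨fun _ ↦ neg_mul B l ▸ hl,
      fun hB ↦ absurd hB (not_dvd hAB hA), fun hD ↦ ?_, fun hE ↦ absurd hA (not_dvd hEA hE)⟩⟩
    exact polyJacobiSym_eq_one_of_mul_eq_sq_mul hf.ne_zero (by ring) (cop hAB hA) (hAD hA hD) hl
  by_cases hB : f ∣ B
  · refine ⟨-A, (cop hAB.symm hB).neg_right, fun l hl ↦ ⟨fun h ↦ absurd h hA,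
      fun _ ↦ neg_mul A l ▸ hl, fun hD ↦ ?_, fun hE ↦ absurd hB (not_dvd hEB hE)⟩⟩
    exact polyJacobiSym_eq_one_of_mul_eq_sq_mul hf.ne_zero (by ring) (cop hAB.symm hB)
      (hBD hB hD) hl
  by_cases hD : f ∣ D
  · refine ⟨E * G, (cop hED.symm hD).mul_right (cop hGD.symm hD), fun l hl ↦
      ⟨fun h ↦ absurd h hA, fun h ↦ absurd h hB, fun _ ↦ ?_,
        fun hE ↦ absurd hD (not_dvd hED hE)⟩⟩
    rwa [neg_mul, mul_neg, neg_neg, ← mul_assoc]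
  by_cases hE : f ∣ E
  · refine ⟨D * G, (cop hED hE).mul_right (cop hEG hE), fun l hl ↦
      ⟨fun h ↦ absurd h hA, fun h ↦ absurd h hB, fun h ↦ absurd h hD, fun _ ↦ ?_⟩⟩
    rwa [neg_mul, mul_neg, neg_neg, ← mul_assoc]
  exact ⟨1, isCoprime_one_right, fun _ _ ↦ ⟨fun h ↦ absurd h hA, fun h ↦ absurd h hB,
    fun h ↦ absurd h hD, fun h ↦ absurd h hE⟩⟩

lemma exists_leadingCoeff_solvableAtInfinity (hA : G * A ≠ 0) (hB : B ≠ 0)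
    (hD : D ≠ 0)
    (hpar : ((G * A).natDegree ≡ D.natDegree [MOD 2] ∧ (G * A).natDegree ≡ E.natDegree [MOD 2]) ∨
      ((G * A).natDegree ≡ (G * B).natDegree [MOD 2] ∧
        (G * A).natDegree ≡ D.natDegree [MOD 2])) :
    ∃ c : F, c ≠ 0 ∧ ∀ l : F[X], l.leadingCoeff = c → l.natDegree ≡ A.natDegree [MOD 2] →
      SolvableAtInfinity A B l ∧ SolvableAtInfinity D E (-G * l) := by
  have hG0 := left_ne_zero_of_mul hA
  have hA0 := right_ne_zero_of_mul hA
  have hdeg {l : F[X]} (hl : l ≠ 0) (hlA : l.natDegree ≡ A.natDegree [MOD 2]) :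
      (-G * l).natDegree ≡ (G * A).natDegree [MOD 2] := by
    rw [neg_mul, natDegree_neg, natDegree_mul hG0 hl, natDegree_mul hG0 hA0]
    exact hlA.add_left _
  have ne_zero {c : F} (hc : c ≠ 0) {l : F[X]} (hlc : l.leadingCoeff = c) : l ≠ 0 :=
    leadingCoeff_ne_zero.1 (hlc ▸ hc)
  rcases hpar with ⟨hAD, hAE⟩ | ⟨hAB, hAD⟩
  · have hc : -A.leadingCoeff ≠ 0 := neg_ne_zero.2 (leadingCoeff_ne_zero.2 hA0)
    refine ⟨_, hc, fun l hlc hlA ↦ ⟨.inr ⟨hlA.symm, ?_⟩,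
      .inl ⟨hAD.symm.trans hAE, hAD.symm.trans (hdeg (ne_zero hc hlc) hlA).symm⟩⟩⟩
    rw [hlc, mul_neg, neg_neg, ← pow_two, quadraticChar_sq_one' (leadingCoeff_ne_zero.2 hA0)]
  · have hc : D.leadingCoeff * G.leadingCoeff ≠ 0 :=
      mul_ne_zero (leadingCoeff_ne_zero.2 hD) (leadingCoeff_ne_zero.2 hG0)
    refine ⟨_, hc, fun l hlc hlA ↦ ⟨.inl ⟨?_, hlA.symm⟩,
      .inr ⟨hAD.symm.trans (hdeg (ne_zero hc hlc) hlA).symm, ?_⟩⟩⟩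
    · rw [natDegree_mul hG0 hA0, natDegree_mul hG0 hB] at hAB
      exact hAB.add_left_cancel'
    · rw [leadingCoeff_mul, leadingCoeff_neg, hlc, ← quadraticChar_sq_one' hc]
      congr 1
      ring

theorem isotropicDiag_quaternary (hF : ringChar F ≠ 2) (hA : Squarefree (G * A))
    (hB : Squarefree (G * B)) (hD : Squarefree D) (hE : Squarefree E) (hAB : IsCoprime A B)
    (hEA : IsCoprime E (G * A)) (hEB : IsCoprime E (G * B)) (hED : IsCoprime E D)
    (hGD : IsCoprime G D)
    (hGDE : ∀ f, f.Monic → Irreducible f → f ∣ G → polyJacobiSym (-(D * E)) f = 1)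
    (hAD : ∀ f, f.Monic → Irreducible f → f ∣ A → f ∣ D → polyJacobiSym (-(G * B * E)) f = 1)
    (hBD : ∀ f, f.Monic → Irreducible f → f ∣ B → f ∣ D → polyJacobiSym (-(G * A * E)) f = 1)
    (hpar : ((G * A).natDegree ≡ D.natDegree [MOD 2] ∧ (G * A).natDegree ≡ E.natDegree [MOD 2]) ∨
      ((G * A).natDegree ≡ (G * B).natDegree [MOD 2] ∧
        (G * A).natDegree ≡ D.natDegree [MOD 2])) :
    IsotropicDiag ![G * A, G * B, D, E] := by
  obtain ⟨c, hc, hinf⟩ := exists_leadingCoeff_solvableAtInfinity hA.ne_zero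
    (right_ne_zero_of_mul hB.ne_zero) hD.ne_zero hpar
  have hEG : IsCoprime E G := hEA.of_mul_right_left
  have hG : Squarefree G := hA.of_mul_left
  have hN : G * A * B * D * E ≠ 0 := by
    simpa [hD.ne_zero, hE.ne_zero, right_ne_zero_of_mul hB.ne_zero] using hA.ne_zero
  obtain ⟨l, hl, hlc, hlA, hlN, hlJ⟩ := exists_irreducible_forall_of_enforceableAt hF hN
    (fun f hfm hf _ ↦ enforceableAt_quaternary hf hAB hEA.of_mul_right_right hEB.of_mul_right_right
      hED hGD hEG (hAD f hfm hf) (hBD f hfm hf)) hc A.natDegree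
  have cop {x : F[X]} (h : x ∣ G * A * B * D * E) : IsCoprime x l :=
    hlN.of_isCoprime_of_dvd_left h
  have hGN : G ∣ G * A * B * D * E := Dvd.intro (A * B * D * E) (by ring)
  have hAN : A ∣ G * A * B * D * E := Dvd.intro (G * B * D * E) (by ring)
  have hBN : B ∣ G * A * B * D * E := Dvd.intro (G * A * D * E) (by ring)
  have hDN : D ∣ G * A * B * D * E := Dvd.intro (G * A * B * E) (by ring)
  have hEN : E ∣ G * A * B * D * E := Dvd.intro (G * A * B * D) (by ring)
  have hABl : IsotropicDiag ![A, B, l] :=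
    isotropicDiag_of_irreducible hF hA.of_mul_right hB.of_mul_right hl hAB (cop hAN) (cop hBN)
      (fun f hfm hf h ↦ (hlJ f hfm hf (h.trans hAN)).1 h)
      (fun f hfm hf h ↦ (hlJ f hfm hf (h.trans hBN)).2.1 h) (hinf l hlc hlA).1
  have hGl : Squarefree (-G * l) := by
    rw [neg_mul, (Associated.refl (G * l)).neg_left.squarefree_iff]
    exact squarefree_mul_iff.2 ⟨(cop hGN).isRelPrime, hG, hl.squarefree⟩
  have hDEl : IsotropicDiag ![D, E, -G * l] :=
    isotropicDiag_of_forall_ne hF hl hD hE hGl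
      hED.symm (hGD.symm.neg_right.mul_right (cop hDN)) (hEG.neg_right.mul_right (cop hEN))
      (fun f hfm hf h ↦ (hlJ f hfm hf (h.trans hDN)).2.2.1 h)
      (fun f hfm hf h ↦ (hlJ f hfm hf (h.trans hEN)).2.2.2 h)
      (fun f hfm hf h ↦ hGDE f hfm hf (dvd_neg.1 h)) (hinf l hlc hlA).2
  refine IsotropicDiag.glue (c := G * l) (mul_ne_zero hG.ne_zero hl.ne_zero) ?_ ?_
  · have hmul : ![G * A, G * B, G * l] = fun i ↦ G * ![A, B, l] i := by
      funext i
      fin_cases i <;> rfl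
    exact hmul ▸ hABl.const_mul G
  · rwa [← neg_mul]

end Quaternary

section Splitting

lemma exists_perm_modEq_two (d : Fin 5 → ℕ) : ∃ σ : Equiv.Perm (Fin 5),
    d (σ 0) ≡ d (σ 1) [MOD 2] ∧
      ((d (σ 2) ≡ d (σ 4) [MOD 2] ∧ d (σ 2) ≡ d (σ 0) [MOD 2]) ∨
        (d (σ 2) ≡ d (σ 3) [MOD 2] ∧ d (σ 2) ≡ d (σ 4) [MOD 2])) := by
  -- A parity occurring twice goes to the places `0, 1`, a parity occurring once to the place `3`.
  have hbool (g : Fin 5 → Bool) : ∃ σ : Equiv.Perm (Fin 5), g (σ 0) = g (σ 1) ∧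
      ((g (σ 2) = g (σ 4) ∧ g (σ 2) = g (σ 0)) ∨ (g (σ 2) = g (σ 3) ∧ g (σ 2) = g (σ 4))) := by
    revert g
    decide +kernel
  have hparity (m n : ℕ) : decide (Even m) = decide (Even n) ↔ m ≡ n [MOD 2] := by
    rw [decide_eq_decide, Nat.even_iff, Nat.even_iff, Nat.ModEq]
    lia
  simpa only [hparity] using hbool fun i ↦ decide (Even (d i))

lemma exists_isMonicGcd_mul_mul {F : Type*} [Field F] {x : F[X]} (hx : x ≠ 0) (y : F[X]) :
    ∃ g x' y', IsMonicGcd x y g ∧ x = g * x' ∧ y = g * y' ∧ IsCoprime x' y' := by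
  classical
  obtain ⟨x', y', hx', hy', hunit⟩ := extract_gcd x y
  have hmonic : (gcd x y).Monic := by
    rw [← normalize_gcd]
    exact monic_normalize fun h ↦ hx ((gcd_eq_zero_iff x y).1 h).1
  exact ⟨gcd x y, x', y', ⟨hmonic, gcd_dvd_left x y,
    gcd_dvd_right x y, fun _ ↦ dvd_gcd⟩, hx', hy', (gcd_isUnit_iff x' y').1 hunit⟩

lemma exists_ratFunc_sum_eq {F : Type*} [Field F] (hF : ringChar F ≠ 2) {n : ℕ}
    {a : Fin n → F[X]} {c : F[X]} (ha : ∀ i, a i ≠ 0)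
    (h : IsotropicDiag (Fin.cons (-c) a : Fin (n + 1) → F[X])) :
    ∃ x : Fin n → RatFunc F,
      ∑ i, algebraMap F[X] (RatFunc F) (a i) * x i ^ 2 = algebraMap F[X] (RatFunc F) c := by
  have hinj := IsFractionRing.injective F[X] (RatFunc F)
  have h2 : (2 : RatFunc F) ≠ 0 := by
    rw [← map_ofNat (algebraMap F (RatFunc F)) 2]
    exact (_root_.map_ne_zero _).2 (Ring.two_ne_zero hF)
  refine exists_sum_eq_of_isotropicDiag_cons h2 (fun i ↦ (map_ne_zero_iff _ hinj).2 (ha i)) ?_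
  have hcons : algebraMap F[X] (RatFunc F) ∘ (Fin.cons (-c) a : Fin (n + 1) → F[X]) =
      Fin.cons (-algebraMap F[X] (RatFunc F) c) (algebraMap F[X] (RatFunc F) ∘ a) := by
    rw [← map_neg]
    exact Fin.comp_cons _ _ _
  exact hcons ▸ h.map hinj

variable {F : Type*} [Field F] [Fintype F] [DecidableEq F] {P U V G A B D : F[X]}

/-- The residue conditions on `p` at `f` under which `P * p` is represented at `f` both by
`⟨P * U, P * V⟩` and by `⟨-G * A, -G * B, -D⟩`. -/
structure SplitsAt (P U V G A B D f p : F[X]) : Prop where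
  of_dvd_U : f ∣ U → polyJacobiSym (-(V * -p)) f = 1
  of_dvd_V : f ∣ V → polyJacobiSym (-(U * -p)) f = 1
  of_dvd_G : f ∣ G → polyJacobiSym (-(D * (P * p))) f = 1
  of_dvd_A : f ∣ A → f ∣ D → polyJacobiSym (-(G * B * (P * p))) f = 1
  of_dvd_B : f ∣ B → f ∣ D → polyJacobiSym (-(G * A * (P * p))) f = 1

lemma EnforceableAt.mono {f : F[X]} {R R' : F[X] → Prop} (h : EnforceableAt f R)
    (hRR' : ∀ l, R l → R' l) : EnforceableAt f R' := by
  obtain ⟨w, hw, hwR⟩ := h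
  exact ⟨w, hw, fun l hl ↦ hRR' l (hwR l hl)⟩

lemma SplitsAt.swap_left {f p : F[X]} (h : SplitsAt P U V G A B D f p) :
    SplitsAt P V U G A B D f p :=
  ⟨h.of_dvd_V, h.of_dvd_U, h.of_dvd_G, h.of_dvd_A, h.of_dvd_B⟩

lemma SplitsAt.swap_right {f p : F[X]} (h : SplitsAt P U V G A B D f p) :
    SplitsAt P U V G B A D f p :=
  ⟨h.of_dvd_U, h.of_dvd_V, h.of_dvd_G, h.of_dvd_B, h.of_dvd_A⟩

lemma enforceableAt_splitsAt_of_dvd_U {f : F[X]} (hf : Irreducible f) (hUV : IsCoprime U V)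
    (hN : ¬f ^ 3 ∣ P * U * (P * V) * (G * A) * (G * B) * D) (hU : f ∣ U) :
    EnforceableAt f (SplitsAt P U V G A B D f) := by
  have hV : ¬f ∣ V := not_dvd_of_isCoprime hf.not_isUnit hUV hU
  have hG : ¬f ∣ G := fun hG ↦ not_dvd_of_not_pow_three_dvd hN
    (Dvd.intro (P * V * P * A * B * D) (by ring)) hU hG hG
  have hABD : f ∣ A * B → ¬f ∣ D := not_dvd_of_not_pow_three_dvd hN
    (Dvd.intro (P * V * P * G * G) (by ring)) hU
  exact ⟨V, hf.coprime_iff_not_dvd.2 hV, fun l hl ↦ ⟨fun _ ↦ by rwa [mul_neg, neg_neg],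
    fun h ↦ absurd h hV, fun h ↦ absurd h hG, fun h h' ↦ absurd h' (hABD (h.mul_right B)),
    fun h h' ↦ absurd h' (hABD (h.mul_left A))⟩⟩

lemma enforceableAt_splitsAt_of_dvd_G {f : F[X]} (hf : Irreducible f) (hU : ¬f ∣ U) (hV : ¬f ∣ V)
    (hN : ¬f ^ 3 ∣ P * U * (P * V) * (G * A) * (G * B) * D) (hG : f ∣ G) :
    EnforceableAt f (SplitsAt P U V G A B D f) := by
  have hD : ¬f ∣ D := not_dvd_of_not_pow_three_dvd hN
    (Dvd.intro (P * U * (P * V) * A * B) (by ring)) hG hG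
  have hP : ¬f ∣ P := not_dvd_of_not_pow_three_dvd hN
    (Dvd.intro (U * (P * V) * A * B * D) (by ring)) hG hG
  refine ⟨-(D * P), ((hf.coprime_iff_not_dvd.2 hD).mul_right
    (hf.coprime_iff_not_dvd.2 hP)).neg_right, fun l hl ↦ ⟨fun h ↦ absurd h hU,
      fun h ↦ absurd h hV, fun _ ↦ ?_, fun _ h ↦ absurd h hD, fun _ h ↦ absurd h hD⟩⟩
  rwa [← mul_assoc, ← neg_mul]

lemma enforceableAt_splitsAt_of_dvd_A {f : F[X]} (hf : Irreducible f) (hU : ¬f ∣ U) (hV : ¬f ∣ V)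
    (hG : ¬f ∣ G) (hAB : IsCoprime A B)
    (hN : ¬f ^ 3 ∣ P * U * (P * V) * (G * A) * (G * B) * D) (hA : f ∣ A) (hD : f ∣ D) :
    EnforceableAt f (SplitsAt P U V G A B D f) := by
  have hB : ¬f ∣ B := not_dvd_of_isCoprime hf.not_isUnit hAB hA
  have hP : ¬f ∣ P := not_dvd_of_not_pow_three_dvd hN
    (Dvd.intro (U * (P * V) * G * G * B) (by ring)) hA hD
  have hw : IsCoprime f (G * B * P) :=
    ((hf.coprime_iff_not_dvd.2 hG).mul_right (hf.coprime_iff_not_dvd.2 hB)).mul_right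
      (hf.coprime_iff_not_dvd.2 hP)
  refine ⟨-(G * B * P), hw.neg_right, fun l hl ↦ ⟨fun h ↦ absurd h hU, fun h ↦ absurd h hV,
    fun h ↦ absurd h hG, fun _ _ ↦ ?_, fun h ↦ absurd h hB⟩⟩
  rwa [← mul_assoc, ← neg_mul]

-- Since `f ^ 3` does not divide the determinant, at most one of the five conditions is nonvacuous.
lemma enforceableAt_splitsAt {f : F[X]} (hf : Irreducible f) (hUV : IsCoprime U V)
    (hAB : IsCoprime A B) (hN : ¬f ^ 3 ∣ P * U * (P * V) * (G * A) * (G * B) * D) :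
    EnforceableAt f (SplitsAt P U V G A B D f) := by
  by_cases hU : f ∣ U
  · exact enforceableAt_splitsAt_of_dvd_U hf hUV hN hU
  by_cases hV : f ∣ V
  · rw [mul_comm (P * U)] at hN
    exact (enforceableAt_splitsAt_of_dvd_U hf hUV.symm hN hV).mono fun _ ↦ SplitsAt.swap_left
  by_cases hG : f ∣ G
  · exact enforceableAt_splitsAt_of_dvd_G hf hU hV hN hG
  by_cases hA : f ∣ A ∧ f ∣ D
  · exact enforceableAt_splitsAt_of_dvd_A hf hU hV hG hAB hN hA.1 hA.2
  by_cases hB : f ∣ B ∧ f ∣ D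
  · rw [mul_right_comm (P * U * (P * V))] at hN
    exact (enforceableAt_splitsAt_of_dvd_A hf hU hV hG hAB.symm hN hB.1 hB.2).mono
      fun _ ↦ SplitsAt.swap_right
  exact ⟨1, isCoprime_one_right, fun l _ ↦ ⟨fun h ↦ absurd h hU, fun h ↦ absurd h hV,
    fun h ↦ absurd h hG, fun h h' ↦ absurd ⟨h, h'⟩ hA, fun h h' ↦ absurd ⟨h, h'⟩ hB⟩⟩

omit [Fintype F] [DecidableEq F] in
lemma isCoprime_of_mul_self_mul_dvd {x y N : F[X]} (hx : x ≠ 0)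
    (hN : ∀ f : F[X], f.Monic → Irreducible f → ¬f ^ 3 ∣ N) (h : x * x * y ∣ N) :
    IsCoprime x y :=
  isCoprime_of_forall_monic_irreducible hx fun f hfm hf hfx ↦
    not_dvd_of_not_pow_three_dvd (hN f hfm hf) h hfx hfx

lemma exists_ratFunc_binary_eq (hF : ringChar F ≠ 2) (hU : Squarefree (P * U))
    (hV : Squarefree (P * V)) (hUV : IsCoprime U V) {p : F[X]} (hp : Irreducible p)
    (hUVp : IsCoprime (U * V) p)
    (hs : ∀ f, f.Monic → Irreducible f → f ∣ U * V → SplitsAt P U V G A B D f p)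
    (hdegV : U.natDegree ≡ V.natDegree [MOD 2]) (hdegp : U.natDegree ≡ p.natDegree [MOD 2]) :
    ∃ x y : RatFunc F, algebraMap F[X] (RatFunc F) (P * U) * x ^ 2 +
      algebraMap F[X] (RatFunc F) (P * V) * y ^ 2 = algebraMap F[X] (RatFunc F) (P * p) := by
  have hiso : IsotropicDiag ![U, V, -p] :=
    isotropicDiag_of_irreducible hF hU.of_mul_right hV.of_mul_right
      ((Associated.refl p).neg_right.irreducible hp) hUV hUVp.of_mul_left_left.neg_right
      hUVp.of_mul_left_right.neg_right
      (fun f hfm hf h ↦ (hs f hfm hf (h.mul_right V)).of_dvd_U h)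
      (fun f hfm hf h ↦ (hs f hfm hf (h.mul_left U)).of_dvd_V h)
      (.inl ⟨hdegV, by rwa [natDegree_neg]⟩)
  have hcons : (fun i ↦ P * ![U, V, -p] i) ∘ (finRotate 3).symm =
      Fin.cons (-(P * p)) ![P * U, P * V] := by
    funext i
    fin_cases i
    exacts [mul_neg P p, rfl, rfl]
  obtain ⟨x, hx⟩ := exists_ratFunc_sum_eq hF
    (Fin.forall_fin_two.2 ⟨hU.ne_zero, hV.ne_zero⟩)
    (hcons ▸ (hiso.const_mul P).comp_equiv (finRotate 3).symm)
  exact ⟨x 0, x 1, by rwa [Fin.sum_univ_two] at hx⟩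

lemma exists_ratFunc_ternary_eq (hF : ringChar F ≠ 2) (hA : Squarefree (G * A))
    (hB : Squarefree (G * B)) (hD : Squarefree D) (hAB : IsCoprime A B) (hGD : IsCoprime G D)
    {p : F[X]} (hP : Squarefree (P * p)) (hPN : IsCoprime (P * p) ((G * A) * (G * B) * D))
    (hs : ∀ f, f.Monic → Irreducible f → f ∣ G * A * B → SplitsAt P U V G A B D f p)
    (hpar : ((G * A).natDegree ≡ D.natDegree [MOD 2] ∧
        (G * A).natDegree ≡ (P * p).natDegree [MOD 2]) ∨
      ((G * A).natDegree ≡ (G * B).natDegree [MOD 2] ∧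
        (G * A).natDegree ≡ D.natDegree [MOD 2])) :
    ∃ u v w : RatFunc F, -(algebraMap F[X] (RatFunc F) (G * A) * u ^ 2) -
      algebraMap F[X] (RatFunc F) (G * B) * v ^ 2 - algebraMap F[X] (RatFunc F) D * w ^ 2 =
        algebraMap F[X] (RatFunc F) (P * p) := by
  have hiso : IsotropicDiag ![G * A, G * B, D, P * p] :=
    isotropicDiag_quaternary hF hA hB hD hP hAB hPN.of_mul_right_left.of_mul_right_left
      hPN.of_mul_right_left.of_mul_right_right hPN.of_mul_right_right hGD
      (fun f hfm hf h ↦ (hs f hfm hf ((h.mul_right A).mul_right B)).of_dvd_G h)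
      (fun f hfm hf h ↦ (hs f hfm hf ((h.mul_left G).mul_right B)).of_dvd_A h)
      (fun f hfm hf h ↦ (hs f hfm hf (h.mul_left (G * A))).of_dvd_B h) hpar
  have hcons : ![G * A, G * B, D, P * p] ∘ (finRotate 4).symm =
      Fin.cons (- -(P * p)) ![G * A, G * B, D] := by
    rw [neg_neg]
    funext i
    fin_cases i <;> rfl
  have hne : ∀ i, ![G * A, G * B, D] i ≠ 0 := by
    simp [Fin.forall_fin_succ, hA.ne_zero, hB.ne_zero, hD.ne_zero]
  obtain ⟨x, hx⟩ := exists_ratFunc_sum_eq hF hne (hcons ▸ hiso.comp_equiv (finRotate 4).symm)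
  refine ⟨x 0, x 1, x 2, ?_⟩
  rw [Fin.sum_univ_three, map_neg] at hx
  simp only [Matrix.cons_val] at hx
  linear_combination -hx

omit [Fintype F] [DecidableEq F] in
lemma squarefree_mul_and_isCoprime_mul {N : F[X]} (hP : Squarefree P)
    (hcf : ∀ f : F[X], f.Monic → Irreducible f → ¬f ^ 3 ∣ N) {Q p : F[X]} (hQ : P * P * Q ∣ N)
    (hp : Irreducible p) (hNp : IsCoprime N p) : Squarefree (P * p) ∧ IsCoprime (P * p) Q := by
  have hPp : IsCoprime P p :=
    hNp.of_isCoprime_of_dvd_left (((dvd_mul_right P P).mul_right Q).trans hQ)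
  have hQp : IsCoprime Q p := hNp.of_isCoprime_of_dvd_left ((dvd_mul_left Q (P * P)).trans hQ)
  exact ⟨squarefree_mul_iff.2 ⟨hPp.isRelPrime, hP, hp.squarefree⟩,
    (isCoprime_of_mul_self_mul_dvd hP.ne_zero hcf hQ).mul_left hQp.symm⟩

omit [Fintype F] [DecidableEq F] in
theorem exists_residue_forall_ratFunc_eq [Finite F] (hF : ringChar F ≠ 2) (hU : Squarefree (P * U))
    (hV : Squarefree (P * V)) (hA : Squarefree (G * A)) (hB : Squarefree (G * B))
    (hD : Squarefree D) (hUV : IsCoprime U V) (hAB : IsCoprime A B) {N : F[X]}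
    (hN : P * U * (P * V) * (G * A) * (G * B) * D = N)
    (hcf : ∀ f : F[X], f.Monic → Irreducible f → ¬f ^ 3 ∣ N)
    (hdeg : (P * U).natDegree ≡ (P * V).natDegree [MOD 2])
    (hpar : ((G * A).natDegree ≡ D.natDegree [MOD 2] ∧
        (G * A).natDegree ≡ (P * U).natDegree [MOD 2]) ∨
      ((G * A).natDegree ≡ (G * B).natDegree [MOD 2] ∧
        (G * A).natDegree ≡ D.natDegree [MOD 2])) :
    ∃ b, IsCoprime b N ∧ ∀ p, Irreducible p → N ∣ p - b →
      U.natDegree ≡ p.natDegree [MOD 2] →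
      (∃ x y : RatFunc F, algebraMap F[X] (RatFunc F) (P * U) * x ^ 2 +
        algebraMap F[X] (RatFunc F) (P * V) * y ^ 2 = algebraMap F[X] (RatFunc F) (P * p)) ∧
      ∃ u v w : RatFunc F, -(algebraMap F[X] (RatFunc F) (G * A) * u ^ 2) -
        algebraMap F[X] (RatFunc F) (G * B) * v ^ 2 - algebraMap F[X] (RatFunc F) D * w ^ 2 =
          algebraMap F[X] (RatFunc F) (P * p) := by
  classical
  have := Fintype.ofFinite F
  have hN0 : N ≠ 0 := hN ▸ mul_ne_zero (mul_ne_zero (mul_ne_zero (mul_ne_zero hU.ne_zero hV.ne_zero)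
    hA.ne_zero) hB.ne_zero) hD.ne_zero
  obtain ⟨b, hbN, hb⟩ := exists_forall_dvd_sub_of_enforceableAt hN0 fun f hfm hf _ ↦
    enforceableAt_splitsAt hf hUV hAB (hN ▸ hcf f hfm hf)
  refine ⟨b, hbN, fun p hp hpb hpU ↦ ?_⟩
  have hs := hb p hpb
  obtain ⟨k, hk⟩ := hpb
  have hNp : IsCoprime N p := by
    rw [eq_add_of_sub_eq' hk]
    exact (hbN.add_mul_left_left k).symm
  have hUVN : U * V ∣ N := Dvd.intro (P * P * (G * A) * (G * B) * D) (by rw [← hN]; ring)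
  have hGABN : G * A * B ∣ N := Dvd.intro (P * U * (P * V) * G * D) (by rw [← hN]; ring)
  have hGD : IsCoprime G D := isCoprime_of_mul_self_mul_dvd (left_ne_zero_of_mul hA.ne_zero) hcf
    (Dvd.intro (P * U * (P * V) * A * B) (by rw [← hN]; ring))
  obtain ⟨hPp, hPN⟩ := squarefree_mul_and_isCoprime_mul hU.of_mul_left hcf
    (Q := G * A * (G * B) * D) (Dvd.intro (U * V) (by rw [← hN]; ring)) hp hNp
  have hP := left_ne_zero_of_mul hU.ne_zero
  have hU0 := right_ne_zero_of_mul hU.ne_zero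
  have hdegP : (P * U).natDegree ≡ (P * p).natDegree [MOD 2] := by
    rw [natDegree_mul hP hU0, natDegree_mul hP hp.ne_zero]
    exact hpU.add_left _
  rw [natDegree_mul hP hU0, natDegree_mul hP (right_ne_zero_of_mul hV.ne_zero)] at hdeg
  exact ⟨exists_ratFunc_binary_eq hF hU hV hUV hp (hNp.of_isCoprime_of_dvd_left hUVN)
      (fun f hfm hf h ↦ hs f hfm hf (h.trans hUVN)) hdeg.add_left_cancel' hpU,
    exists_ratFunc_ternary_eq hF hA hB hD hAB hGD hPp hPN
      (fun f hfm hf h ↦ hs f hfm hf (h.trans hGABN))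
      (hpar.imp_left (And.imp_right (Nat.ModEq.trans · hdegP)))⟩

omit [Fintype F] [DecidableEq F] in
theorem exists_isMonicGcd_residue_forall_ratFunc_eq [Finite F] (hF : ringChar F ≠ 2)
    {c : Fin 5 → F[X]}
    (hsf : ∀ i, Squarefree (c i)) {N : F[X]} (hN : c 0 * c 1 * c 2 * c 3 * c 4 = N)
    (hcf : ∀ f : F[X], f.Monic → Irreducible f → ¬f ^ 3 ∣ N)
    (hdeg : (c 0).natDegree ≡ (c 1).natDegree [MOD 2])
    (hpar : ((c 2).natDegree ≡ (c 4).natDegree [MOD 2] ∧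
        (c 2).natDegree ≡ (c 0).natDegree [MOD 2]) ∨
      ((c 2).natDegree ≡ (c 3).natDegree [MOD 2] ∧
        (c 2).natDegree ≡ (c 4).natDegree [MOD 2])) :
    ∃ (ε : ℕ) (b P : F[X]), ε ≤ 1 ∧ IsCoprime b N ∧ IsMonicGcd (c 0) (c 1) P ∧
      ∀ p, Irreducible p → N ∣ p - b → p.natDegree % 2 = ε →
      (∃ x y : RatFunc F, algebraMap F[X] (RatFunc F) (c 0) * x ^ 2 +
        algebraMap F[X] (RatFunc F) (c 1) * y ^ 2 = algebraMap F[X] (RatFunc F) (P * p)) ∧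
      ∃ u v w : RatFunc F, -(algebraMap F[X] (RatFunc F) (c 2) * u ^ 2) -
        algebraMap F[X] (RatFunc F) (c 3) * v ^ 2 - algebraMap F[X] (RatFunc F) (c 4) * w ^ 2 =
          algebraMap F[X] (RatFunc F) (P * p) := by
  obtain ⟨P, U, V, hP, h0, h1, hUV⟩ := exists_isMonicGcd_mul_mul (hsf 0).ne_zero (c 1)
  obtain ⟨G, A, B, -, h2, h3, hAB⟩ := exists_isMonicGcd_mul_mul (hsf 2).ne_zero (c 3)
  obtain ⟨b, hb, h⟩ := exists_residue_forall_ratFunc_eq hF (h0 ▸ hsf 0) (h1 ▸ hsf 1) (h2 ▸ hsf 2)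
    (h3 ▸ hsf 3) (hsf 4) hUV hAB (by rw [← hN, h0, h1, h2, h3]) hcf (h0 ▸ h1 ▸ hdeg)
    (h0 ▸ h2 ▸ h3 ▸ hpar)
  refine ⟨U.natDegree % 2, b, P, Nat.lt_succ_iff.1 (Nat.mod_lt _ two_pos), hb, hP,
    fun p hp hpb hpε ↦ ?_⟩
  rw [h0, h1, h2, h3]
  exact h p hp hpb hpε.symm

end Splitting

theorem splitting_quinary_general
    {F : Type*} [Field F] [Finite F] (hodd : ringChar F ≠ 2)
    (a : Fin 5 → F[X]) (hsf : ∀ m, Squarefree (a m))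
    (hcf : ∀ f : F[X], f.Monic → Irreducible f →
      ¬ f ^ 3 ∣ (a 0 * a 1 * a 2 * a 3 * a 4)) :
    ∃ (σ : Equiv.Perm (Fin 5)) (ε : ℕ) (b P : F[X]),
      ε ≤ 1 ∧
      IsCoprime b (a 0 * a 1 * a 2 * a 3 * a 4) ∧
      IsMonicGcd (a (σ 0)) (a (σ 1)) P ∧
      ∀ p : F[X], Irreducible p →
        (a 0 * a 1 * a 2 * a 3 * a 4) ∣ (p - b) → p.natDegree % 2 = ε →
        (∃ x y : RatFunc F,
          algebraMap F[X] (RatFunc F) (a (σ 0)) * x ^ 2 +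
            algebraMap F[X] (RatFunc F) (a (σ 1)) * y ^ 2 =
          algebraMap F[X] (RatFunc F) (P * p)) ∧
        (∃ u v w : RatFunc F,
          -(algebraMap F[X] (RatFunc F) (a (σ 2)) * u ^ 2) -
            algebraMap F[X] (RatFunc F) (a (σ 3)) * v ^ 2 -
            algebraMap F[X] (RatFunc F) (a (σ 4)) * w ^ 2 =
          algebraMap F[X] (RatFunc F) (P * p)) := by
  obtain ⟨σ, hdeg, hpar⟩ := exists_perm_modEq_two fun i ↦ (a i).natDegree
  have hprod : a (σ 0) * a (σ 1) * a (σ 2) * a (σ 3) * a (σ 4) = a 0 * a 1 * a 2 * a 3 * a 4 := by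
    simpa only [Fin.prod_univ_five] using Equiv.prod_comp σ a
  exact ⟨σ, exists_isMonicGcd_residue_forall_ratFunc_eq hodd (c := a ∘ σ) (fun i ↦ hsf (σ i))
    hprod hcf hdeg hpar⟩

/-- splitting a quinary diagonal form with squarefree coefficients,
cubefree determinant and anisotropic ternary subforms: there are a permutation `σ`, a
parity `ε` and a residue class `b` modulo `D = a₁a₂a₃a₄a₅` such that for every monic
irreducible `a ≡ b (mod D)` of degree `≡ ε (mod 2)`, both
`a_{σ(1)}x² + a_{σ(2)}y² = P·a` and `−a_{σ(3)}u² − a_{σ(4)}v² − a_{σ(5)}w² = P·a` are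
solvable over `𝔽_q(t)`, where `P` is the monic gcd of `a_{σ(1)}` and `a_{σ(2)}`. -/
theorem splitting_quinary
    {F : Type*} [Field F] [Fintype F] (hodd : ringChar F ≠ 2)
    (a : Fin 5 → F[X]) (hsf : ∀ m, Squarefree (a m))
    (hcf : ∀ f : F[X], f.Monic → Irreducible f →
      ¬ f ^ 3 ∣ (a 0 * a 1 * a 2 * a 3 * a 4))
    (hter : ∀ i j k : Fin 5, i < j → j < k → ∀ x y z : RatFunc F,
      algebraMap F[X] (RatFunc F) (a i) * x ^ 2 +
        algebraMap F[X] (RatFunc F) (a j) * y ^ 2 +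
        algebraMap F[X] (RatFunc F) (a k) * z ^ 2 = 0 → x = 0 ∧ y = 0 ∧ z = 0) :
    ∃ (σ : Equiv.Perm (Fin 5)) (ε : ℕ) (b P : F[X]),
      ε ≤ 1 ∧
      IsCoprime b (a 0 * a 1 * a 2 * a 3 * a 4) ∧
      IsMonicGcd (a (σ 0)) (a (σ 1)) P ∧
      ∀ p : F[X], p.Monic → Irreducible p →
        (a 0 * a 1 * a 2 * a 3 * a 4) ∣ (p - b) → p.natDegree % 2 = ε →
        (∃ x y : RatFunc F,
          algebraMap F[X] (RatFunc F) (a (σ 0)) * x ^ 2 +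
            algebraMap F[X] (RatFunc F) (a (σ 1)) * y ^ 2 =
          algebraMap F[X] (RatFunc F) (P * p)) ∧
        (∃ u v w : RatFunc F,
          -(algebraMap F[X] (RatFunc F) (a (σ 2)) * u ^ 2) -
            algebraMap F[X] (RatFunc F) (a (σ 3)) * v ^ 2 -
            algebraMap F[X] (RatFunc F) (a (σ 4)) * w ^ 2 =
          algebraMap F[X] (RatFunc F) (P * p)) := by
  obtain ⟨σ, ε, b, P, hε, hb, hP, h⟩ := splitting_quinary_general hodd a hsf hcf
  exact ⟨σ, ε, b, P, hε, hb, hP, fun p _ hp ↦ h p hp⟩
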